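/- arXiv:0704.3327 — 7 statements merged into one kernel-verified Lean document; each statement's English description precedes it below -/
import Mathlib

section
/- Let k be a field, X a scheme of finite type over k, and m a natural number. Then the contravariant functor F_m^X from the category of k-schemes to the category of sets, defined by F_m^X(Z) = Hom_k(Z ×_{Spec k} Spec(k[t]/(t^{m+1})), X), is representable by a scheme X_m of finite type over k; that is, there exist a k-scheme X_m of finite type over k and a morphism u : X_m ×_{Spec k} Spec(k[t]/(t^{m+1})) → X such that for every k-scheme Z the map Hom_k(Z, X_m) → F_m^X(Z), g ↦ u ∘ (g × id), is bijective. -/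
open AlgebraicGeometry CategoryTheory Limits

noncomputable section

variable (k : Type) [Field k] (m : ℕ)

/-- The ring `k[t]/(t^{m+1})`. -/
abbrev JetRing : Type := Polynomial k ⧸ Ideal.span {(Polynomial.X : Polynomial k) ^ (m + 1)}

/-- `Spec k`. -/
abbrev Speck := Spec (CommRingCat.of k)

/-- `Spec (k[t]/(t^{m+1}))`. -/
abbrev JetSpec := Spec (CommRingCat.of (JetRing k m))

/-- The structure morphism `Spec (k[t]/(t^{m+1})) → Spec k`. -/
def jetStruct : JetSpec k m ⟶ Speck k :=
  Spec.map (CommRingCat.ofHom (algebraMap k (JetRing k m)))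

/-- Evaluation at `t = 0`, `k[t]/(t^{m+1}) → k`, as a `k`-algebra homomorphism. -/
def jetEvalAlgHom : JetRing k m →ₐ[k] k :=
  Ideal.Quotient.liftₐ _ ((Polynomial.aeval (0 : k)).restrictScalars k)
    (by
      intro p hp
      rw [Ideal.mem_span_singleton] at hp
      obtain ⟨q, rfl⟩ := hp
      simp)

/-- The `k`-point `t = 0` of `Spec (k[t]/(t^{m+1}))`. -/
def jetZero : Speck k ⟶ JetSpec k m :=
  Spec.map (CommRingCat.ofHom (jetEvalAlgHom k m).toRingHom)

lemma jetZero_jetStruct : jetZero k m ≫ jetStruct k m = 𝟙 (Speck k) := by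
  rw [jetZero, jetStruct, ← Spec.map_comp, ← Spec.map_id]
  congr 1
  ext c
  simpa using (jetEvalAlgHom k m).commutes c

end

/-!
Over an affine base `Spec k`, let `R` be a finite free `k`-algebra. A `k`-algebra homomorphism
`A → C ⊗ R` is given by coordinates in `C` with respect to a basis of `R`, subject to polynomial
equations, so the jets of an affine scheme are represented by an affine scheme, of finite type
when `A` is.

If `Spec R ⟶ Spec k` has a surjective section, as `t = 0` for `R = k[t]/(t^{m+1})`, then
`Z ×[k] Spec R` has the same points as `Z`. Hence a jet of `X` lies in an open subscheme `U` as soon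
as its centre does: the jet functor of `U` is the pullback of the jet functor of `X` along
`U ⟶ X`. So the jet functor of `X`, which is a Zariski sheaf, is covered by open subfunctors
represented by affine schemes, and it is represented by a scheme affine over `X`. The latter also
gives quasi-compactness over `k` when `X` is quasi-compact.
-/

open TensorProduct

universe u v

noncomputable section JetAlgebra

variable {k R ι : Type*} [CommRing k] [CommRing R] [Algebra k R] (b : Module.Basis ι k R)
  {P A C : Type*} [CommRing P] [Algebra k P] [CommRing C] [Algebra k C]

lemma tensorBasis_repr_map (f : P →ₐ[k] C) (x : P ⊗[k] R) (i : ι) :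
    (Algebra.TensorProduct.basis C b).repr (Algebra.TensorProduct.map f (AlgHom.id k R) x) i =
      f ((Algebra.TensorProduct.basis P b).repr x i) := by
  induction x with
  | zero => simp
  | tmul a r => simp
  | add x y hx hy => simp [hx, hy]

variable {σ : Type*} [Fintype ι]

/-- The polynomial case of the jet algebra: the tuple with coordinates `∑ i, X (s, i) ⊗ b i`,
the universal `σ`-tuple of elements of `C ⊗ R` for varying `k`-algebras `C`. -/
def genericTuple : MvPolynomial σ k →ₐ[k] MvPolynomial (σ × ι) k ⊗[k] R :=
  MvPolynomial.aeval fun s ↦ ∑ i, MvPolynomial.X (s, i) ⊗ₜ[k] b i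

lemma tensorBasis_repr_genericTuple_X (s : σ) (i : ι) :
    (Algebra.TensorProduct.basis _ b).repr (genericTuple b (MvPolynomial.X s)) i =
      MvPolynomial.X (s, i) := by
  classical
  simp [genericTuple, Finsupp.single_apply]

lemma bijective_map_comp_genericTuple :
    Function.Bijective fun f : MvPolynomial (σ × ι) k →ₐ[k] C ↦
      (Algebra.TensorProduct.map f (AlgHom.id k R)).comp (genericTuple b) := by
  have repr_X (f : MvPolynomial (σ × ι) k →ₐ[k] C) (s : σ) (i : ι) :
      (Algebra.TensorProduct.basis C b).repr
        (Algebra.TensorProduct.map f (AlgHom.id k R) (genericTuple b (MvPolynomial.X s))) i =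
      f (MvPolynomial.X (s, i)) := by
    rw [tensorBasis_repr_map, tensorBasis_repr_genericTuple_X]
  refine ⟨fun f g hfg ↦ MvPolynomial.algHom_ext fun ⟨s, i⟩ ↦ ?_, fun h ↦
    ⟨MvPolynomial.aeval fun si ↦
      (Algebra.TensorProduct.basis C b).repr (h (MvPolynomial.X si.1)) si.2, ?_⟩⟩
  · rw [← repr_X, ← repr_X]
    exact congr(((Algebra.TensorProduct.basis C b).repr ($hfg (MvPolynomial.X s))) i)
  · refine MvPolynomial.algHom_ext fun s ↦ (Algebra.TensorProduct.basis C b).ext_elem fun i ↦ ?_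
    exact (repr_X _ s i).trans (MvPolynomial.aeval_X _ _)

variable (K : Ideal (MvPolynomial σ k))

/-- The equations of the jet algebra: the coefficients of the equations in `K` evaluated at the
generic tuple. -/
def jetIdeal : Ideal (MvPolynomial (σ × ι) k) :=
  Ideal.span {c | ∃ q ∈ K, ∃ i, (Algebra.TensorProduct.basis _ b).repr (genericTuple b q) i = c}

lemma jetIdeal_le_ker_iff (f : MvPolynomial (σ × ι) k →ₐ[k] C) :
    jetIdeal b K ≤ RingHom.ker f ↔
      K ≤ RingHom.ker ((Algebra.TensorProduct.map f (AlgHom.id k R)).comp (genericTuple b)) := by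
  rw [jetIdeal, Ideal.span_le]
  constructor
  · intro h q hq
    refine (Algebra.TensorProduct.basis C b).ext_elem fun i ↦ ?_
    rw [AlgHom.comp_apply, tensorBasis_repr_map, map_zero]
    exact h ⟨q, hq, i, rfl⟩
  · rintro h _ ⟨q, hq, i, rfl⟩
    have hq' := congr((Algebra.TensorProduct.basis C b).repr $(h hq) i)
    rwa [AlgHom.comp_apply, tensorBasis_repr_map, map_zero] at hq'

/-- The algebra of `R`-jets of `k[σ]/K`, representing `C ↦ Hom_k(k[σ]/K, C ⊗ R)`. -/
abbrev JetAlgebra : Type _ := MvPolynomial (σ × ι) k ⧸ jetIdeal b K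

/-- The universal `R`-jet of `k[σ]/K`. -/
def univJet : (MvPolynomial σ k ⧸ K) →ₐ[k] JetAlgebra b K ⊗[k] R :=
  Ideal.Quotient.liftₐ K
    ((Algebra.TensorProduct.map (Ideal.Quotient.mkₐ k (jetIdeal b K)) (AlgHom.id k R)).comp
      (genericTuple b))
    fun _ hq ↦ RingHom.mem_ker.mp
      ((jetIdeal_le_ker_iff b K _).mp (Ideal.Quotient.mkₐ_ker k _).ge hq)

lemma map_comp_univJet_comp_mk (f : JetAlgebra b K →ₐ[k] C) :
    ((Algebra.TensorProduct.map f (AlgHom.id k R)).comp (univJet b K)).comp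
        (Ideal.Quotient.mkₐ k K) =
      (Algebra.TensorProduct.map (f.comp (Ideal.Quotient.mkₐ k _)) (AlgHom.id k R)).comp
        (genericTuple b) := by
  rw [AlgHom.comp_assoc, univJet, Ideal.Quotient.liftₐ_comp, ← AlgHom.comp_assoc,
    ← Algebra.TensorProduct.map_comp, AlgHom.id_comp]

lemma bijective_map_comp_univJet :
    Function.Bijective fun f : JetAlgebra b K →ₐ[k] C ↦
      (Algebra.TensorProduct.map f (AlgHom.id k R)).comp (univJet b K) := by
  obtain ⟨inj, surj⟩ := bijective_map_comp_genericTuple (C := C) (σ := σ) b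
  constructor
  · intro f g hfg
    refine Ideal.Quotient.algHom_ext k (inj ?_)
    simpa only [map_comp_univJet_comp_mk] using congr(($hfg).comp (Ideal.Quotient.mkₐ k K))
  · intro h
    obtain ⟨f, hf⟩ := surj (h.comp (Ideal.Quotient.mkₐ k K))
    have hK : jetIdeal b K ≤ RingHom.ker f := by
      rw [jetIdeal_le_ker_iff]
      intro q hq
      rw [RingHom.mem_ker, show AlgHom.comp _ _ = _ from hf]
      simp [Ideal.Quotient.eq_zero_iff_mem.mpr hq]
    refine ⟨Ideal.Quotient.liftₐ _ f fun _ hq ↦ RingHom.mem_ker.mp (hK hq),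
      Ideal.Quotient.algHom_ext k ?_⟩
    rw [map_comp_univJet_comp_mk, Ideal.Quotient.liftₐ_comp, ← hf]

end JetAlgebra

section UniversalAlgHom

lemma exists_mvPolynomial_quotient_algEquiv (k A : Type u) [CommRing k] [CommRing A]
    [Algebra k A] :
    ∃ (σ : Type u) (K : Ideal (MvPolynomial σ k)), Nonempty ((MvPolynomial σ k ⧸ K) ≃ₐ[k] A) ∧
      (Algebra.FiniteType k A → Finite σ) := by
  obtain ⟨σ, π, hπ, hσ⟩ : ∃ (σ : Type u) (π : MvPolynomial σ k →ₐ[k] A),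
      Function.Surjective π ∧ (Algebra.FiniteType k A → Finite σ) := by
    by_cases hA : Algebra.FiniteType k A
    · obtain ⟨σ, _, π, hπ⟩ := Algebra.FiniteType.iff_quotient_mvPolynomial'.mp hA
      exact ⟨σ, π, hπ, fun _ ↦ inferInstance⟩
    · exact ⟨A, MvPolynomial.aeval id, fun a ↦ ⟨.X a, by simp⟩, fun h ↦ (hA h).elim⟩
  exact ⟨σ, RingHom.ker π, ⟨Ideal.quotientKerAlgEquivOfSurjective hπ⟩, hσ⟩

theorem exists_universal_algHom_tensorProduct (k R A : Type u) [CommRing k] [CommRing R]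
    [Algebra k R] [Module.Free k R] [Module.Finite k R] [CommRing A] [Algebra k A] :
    ∃ (B : Type u) (_ : CommRing B) (_ : Algebra k B) (υ : A →ₐ[k] B ⊗[k] R),
      (Algebra.FiniteType k A → Algebra.FiniteType k B) ∧
      ∀ (C : Type u) [CommRing C] [Algebra k C], Function.Bijective fun f : B →ₐ[k] C ↦
        (Algebra.TensorProduct.map f (AlgHom.id k R)).comp υ := by
  obtain ⟨σ, K, ⟨e⟩, hσ⟩ := exists_mvPolynomial_quotient_algEquiv k A
  let b := Module.Free.chooseBasis k R
  refine ⟨JetAlgebra b K, inferInstance, inferInstance, (univJet b K).comp e.symm, fun hA ↦ ?_,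
    fun C _ _ ↦ ?_⟩
  · have := hσ hA
    infer_instance
  · exact ((AlgEquiv.arrowCongr e AlgEquiv.refl).bijective).comp (bijective_map_comp_univJet b K)

end UniversalAlgHom

section Jets

variable {S J X : Scheme.{u}}

/-- A `J`-jet of `X` over `S` parametrised by `Z`: a structure morphism `Z ⟶ S` together with an
`S`-morphism `Z ×[S] J ⟶ X`. -/
structure Jet_s0 (p : J ⟶ S) (sX : X ⟶ S) (Z : Scheme.{u}) where
  base : Z ⟶ S
  hom : pullback base p ⟶ X
  w : hom ≫ sX = pullback.fst base p ≫ base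

namespace Jet_s0

variable {p : J ⟶ S} {sX : X ⟶ S} {Z T T' : Scheme.{u}}

/-- The value of a jet at the `T`-point `(a, q)` of `Z ×[S] J`. Jets are compared through their
values, which avoids equalities between morphisms out of different pullbacks. -/
noncomputable def eval (x : Jet_s0 p sX Z) (a : T ⟶ Z) (q : T ⟶ J) (h : a ≫ x.base = q ≫ p) : T ⟶ X :=
  pullback.lift a q h ≫ x.hom

lemma comp_eval (x : Jet_s0 p sX Z) (b : T' ⟶ T) (a : T ⟶ Z) (q : T ⟶ J)
    (h : a ≫ x.base = q ≫ p) :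
    b ≫ x.eval a q h = x.eval (b ≫ a) (b ≫ q) (by simp only [Category.assoc, h]) := by
  rw [eval, eval, ← Category.assoc]
  congr 1
  refine pullback.hom_ext ?_ ?_
  · rw [Category.assoc, pullback.lift_fst, pullback.lift_fst]
  · rw [Category.assoc, pullback.lift_snd, pullback.lift_snd]

lemma eval_comp_structure (x : Jet_s0 p sX Z) (a : T ⟶ Z) (q : T ⟶ J) (h : a ≫ x.base = q ≫ p) :
    x.eval a q h ≫ sX = a ≫ x.base := by
  rw [eval, Category.assoc, x.w, pullback.lift_fst_assoc]

lemma ext_eval {x y : Jet_s0 p sX Z} (hbase : x.base = y.base)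
    (heval : ∀ (T : Scheme.{u}) (a : T ⟶ Z) (q : T ⟶ J) (hx : a ≫ x.base = q ≫ p)
      (hy : a ≫ y.base = q ≫ p), x.eval a q hx = y.eval a q hy) : x = y := by
  obtain ⟨s, f, hf⟩ := x
  obtain ⟨s, g, hg⟩ := y
  obtain rfl : _ = s := hbase
  congr 1
  simpa only [eval, pullback.lift_fst_snd, Category.id_comp] using
    heval _ _ _ pullback.condition pullback.condition

lemma eval_congr {x y : Jet_s0 p sX Z} (hxy : x = y) {a a' : T ⟶ Z} (ha : a = a') {q q' : T ⟶ J}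
    (hq : q = q') (h : a ≫ x.base = q ≫ p) :
    x.eval a q h = y.eval a' q' (hxy ▸ ha ▸ hq ▸ h) := by
  subst hxy ha hq
  rfl

/-- The pullback of a jet along a morphism of parameter schemes. -/
noncomputable def restrict (g : T ⟶ Z) (x : Jet_s0 p sX Z) : Jet_s0 p sX T where
  base := g ≫ x.base
  hom := x.eval (pullback.fst (g ≫ x.base) p ≫ g) (pullback.snd _ _)
    (by rw [Category.assoc, pullback.condition])
  w := by rw [eval_comp_structure, Category.assoc]

@[simp]
lemma restrict_base (g : T ⟶ Z) (x : Jet_s0 p sX Z) : (x.restrict g).base = g ≫ x.base :=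
  rfl

lemma eval_restrict (g : T ⟶ Z) (x : Jet_s0 p sX Z) (a : T' ⟶ T) (q : T' ⟶ J)
    (h : a ≫ (x.restrict g).base = q ≫ p) :
    (x.restrict g).eval a q h = x.eval (a ≫ g) q (by rw [Category.assoc, ← h, restrict_base]) :=
  have h' : a ≫ g ≫ x.base = q ≫ p := h
  calc (x.restrict g).eval a q h
    _ = pullback.lift a q h' ≫ x.eval (pullback.fst _ p ≫ g) (pullback.snd _ p) _ := rfl
    _ = x.eval (a ≫ g) q _ := by
      rw [comp_eval]
      exact eval_congr rfl (by rw [pullback.lift_fst_assoc]) (pullback.lift_snd _ _ _) _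

lemma restrict_id (x : Jet_s0 p sX Z) : x.restrict (𝟙 Z) = x :=
  ext_eval (Category.id_comp _) fun _ _ _ _ _ ↦ by
    rw [eval_restrict]
    exact eval_congr rfl (Category.comp_id _) rfl _

lemma restrict_comp (g : T' ⟶ T) (f : T ⟶ Z) (x : Jet_s0 p sX Z) :
    x.restrict (g ≫ f) = (x.restrict f).restrict g :=
  ext_eval (Category.assoc _ _ _) fun _ _ _ _ _ ↦ by
    simp only [eval_restrict, Category.assoc]

end Jet_s0

/-- The functor of `J`-jets of `X` over `S`, on the category of all schemes: the structure
morphism to `S` is part of the data of a jet. -/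
noncomputable def jetFunctor (p : J ⟶ S) (sX : X ⟶ S) : Scheme.{u}ᵒᵖ ⥤ Type u where
  obj Z := Jet_s0 p sX Z.unop
  map g := TypeCat.ofHom (Jet_s0.restrict g.unop)
  map_id _ := by ext x; exact x.restrict_id
  map_comp _ _ := by ext x; exact x.restrict_comp _ _

section Gluing

variable {Z T Y : Scheme.{u}} (𝒰 : Scheme.OpenCover.{v} Z) (a : T ⟶ Z)

lemma hom_ext_pullback_openCover {g g' : T ⟶ Y}
    (h : ∀ i, pullback.fst a (𝒰.f i) ≫ g = pullback.fst a (𝒰.f i) ≫ g') : g = g' :=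
  Scheme.Cover.hom_ext (𝒰.pullback₁ a) _ _ h

lemma exists_glue_pullback_openCover (f : ∀ i, pullback a (𝒰.f i) ⟶ Y)
    (hf : ∀ {W : Scheme.{u}} (i j) (b : W ⟶ pullback a (𝒰.f i)) (c : W ⟶ pullback a (𝒰.f j)),
      b ≫ pullback.fst _ _ = c ≫ pullback.fst _ _ → b ≫ f i = c ≫ f j) :
    ∃ g : T ⟶ Y, ∀ i, pullback.fst a (𝒰.f i) ≫ g = f i :=
  ⟨Scheme.Cover.glueMorphisms (𝒰.pullback₁ a) f fun i j ↦ hf i j _ _ pullback.condition,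
    Scheme.Cover.ι_glueMorphisms (𝒰.pullback₁ a) f _⟩

end Gluing

namespace Jet_s0

variable {p : J ⟶ S} {sX : X ⟶ S} {Z : Scheme.{u}} (𝒰 : Scheme.OpenCover.{v} Z)

lemma eq_of_restrict_openCover_eq {x y : Jet_s0 p sX Z}
    (h : ∀ i, x.restrict (𝒰.f i) = y.restrict (𝒰.f i)) : x = y := by
  refine ext_eval (𝒰.hom_ext _ _ fun i ↦ congr(($(h i)).base)) fun T a q hx hy ↦
    hom_ext_pullback_openCover 𝒰 a fun i ↦ ?_
  have restr (z : Jet_s0 p sX Z) (hz : a ≫ z.base = q ≫ p) :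
      pullback.fst a (𝒰.f i) ≫ z.eval a q hz =
        (z.restrict (𝒰.f i)).eval (pullback.snd a (𝒰.f i)) (pullback.fst a (𝒰.f i) ≫ q)
          (by rw [restrict_base, ← pullback.condition_assoc, hz, Category.assoc]) := by
    rw [comp_eval, eval_restrict]
    exact eval_congr rfl pullback.condition rfl _
  exact (restr x hx).trans ((eval_congr (h i) rfl rfl _).trans (restr y hy).symm)

lemma eval_eq_of_restrict_pullback_eq {U V T : Scheme.{u}} {f : U ⟶ Z} {g : V ⟶ Z}
    {x : Jet_s0 p sX U} {y : Jet_s0 p sX V}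
    (hxy : x.restrict (pullback.fst f g) = y.restrict (pullback.snd f g)) {a : T ⟶ U} {b : T ⟶ V}
    {q q' : T ⟶ J} (hab : a ≫ f = b ≫ g) (hq : q = q') (ha : a ≫ x.base = q ≫ p)
    (hb : b ≫ y.base = q' ≫ p) : x.eval a q ha = y.eval b q' hb := by
  have := eval_congr hxy (a := pullback.lift a b hab) rfl hq
    (by rw [restrict_base, pullback.lift_fst_assoc, ha])
  rw [eval_restrict, eval_restrict] at this
  simpa only [pullback.lift_fst, pullback.lift_snd] using this

lemma exists_restrict_openCover_eq (x : ∀ i, Jet_s0 p sX (𝒰.X i))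
    (hx : ∀ i j, (x i).restrict (pullback.fst (𝒰.f i) (𝒰.f j)) =
      (x j).restrict (pullback.snd (𝒰.f i) (𝒰.f j))) :
    ∃ y : Jet_s0 p sX Z, ∀ i, y.restrict (𝒰.f i) = x i := by
  obtain ⟨s, hs⟩ : ∃ s : Z ⟶ S, ∀ i, 𝒰.f i ≫ s = (x i).base :=
    ⟨𝒰.glueMorphisms (fun i ↦ (x i).base) fun i j ↦ congr(($(hx i j)).base),
      𝒰.ι_glueMorphisms _ _⟩
  have on_piece (i) : pullback.snd (pullback.fst s p) (𝒰.f i) ≫ (x i).base =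
      (pullback.fst (pullback.fst s p) (𝒰.f i) ≫ pullback.snd s p) ≫ p := by
    rw [← hs, ← pullback.condition_assoc, pullback.condition, Category.assoc]
  obtain ⟨f, hf⟩ := exists_glue_pullback_openCover 𝒰 (pullback.fst s p)
      (fun i ↦ (x i).eval _ _ (on_piece i)) fun i j b c hbc ↦ by
    rw [comp_eval, comp_eval]
    refine eval_eq_of_restrict_pullback_eq (hx i j) ?_ (by rw [reassoc_of% hbc]) _ _
    rw [Category.assoc, Category.assoc, ← pullback.condition, ← pullback.condition,
      reassoc_of% hbc]
  refine ⟨⟨s, f, hom_ext_pullback_openCover 𝒰 (pullback.fst s p) fun i ↦ ?_⟩, fun i ↦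
    ext_eval (hs i) fun T a q h h' ↦ ?_⟩
  · rw [reassoc_of% (hf i), eval_comp_structure, ← hs, ← pullback.condition_assoc]
  · rw [eval_restrict]
    have h'' : (a ≫ 𝒰.f i) ≫ s = q ≫ p := by simpa using h
    let t : T ⟶ pullback (pullback.fst s p) (𝒰.f i) :=
      pullback.lift (pullback.lift (a ≫ 𝒰.f i) q h'') a (pullback.lift_fst _ _ _)
    calc pullback.lift (a ≫ 𝒰.f i) q h'' ≫ f
      _ = t ≫ pullback.fst _ _ ≫ f := by rw [pullback.lift_fst_assoc]
      _ = (x i).eval a q h' := by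
        rw [hf, comp_eval]
        exact eval_congr rfl (pullback.lift_snd _ _ _)
          (by rw [pullback.lift_fst_assoc, pullback.lift_snd]) _

end Jet_s0

lemma isSheaf_jetFunctor (p : J ⟶ S) (sX : X ⟶ S) :
    Presheaf.IsSheaf Scheme.zariskiTopology (jetFunctor p sX) := by
  rw [isSheaf_iff_isSheaf_of_type, Scheme.zariskiTopology, Scheme.grothendieckTopology,
    Precoverage.isSheaf_toGrothendieck_iff_of_isStableUnderBaseChange]
  rintro Z R hR x hx
  obtain ⟨(𝒰 : Scheme.OpenCover Z), rfl⟩ := Scheme.exists_cover_of_mem_pretopology hR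
  obtain ⟨y, hy⟩ := Jet_s0.exists_restrict_openCover_eq 𝒰 (fun i ↦ x (𝒰.f i) (.mk i))
    fun i j ↦ hx _ _ _ _ pullback.condition
  refine ⟨y, ?_, fun y' hy' ↦ ?_⟩
  · rintro _ _ ⟨i⟩
    exact hy i
  · exact Jet_s0.eq_of_restrict_openCover_eq 𝒰 fun i ↦ (hy' _ (.mk i)).trans (hy i).symm

namespace Jet_s0

variable {p : J ⟶ S} {sX : X ⟶ S} {U Z T : Scheme.{u}}

/-- The image of a jet under an `S`-morphism. -/
noncomputable def map (f : U ⟶ X) (x : Jet_s0 p (f ≫ sX) Z) : Jet_s0 p sX Z where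
  base := x.base
  hom := x.hom ≫ f
  w := by rw [Category.assoc, x.w]

@[simp]
lemma map_base (f : U ⟶ X) (x : Jet_s0 p (f ≫ sX) Z) : (x.map f).base = x.base :=
  rfl

lemma eval_map (f : U ⟶ X) (x : Jet_s0 p (f ≫ sX) Z) (a : T ⟶ Z) (q : T ⟶ J)
    (h : a ≫ (x.map f).base = q ≫ p) :
    (x.map f).eval a q h = x.eval a q (by rw [← h, map_base]) ≫ f :=
  (Category.assoc _ _ _).symm

lemma restrict_map (f : U ⟶ X) (g : T ⟶ Z) (x : Jet_s0 p (f ≫ sX) Z) :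
    (x.restrict g).map f = (x.map f).restrict g :=
  ext_eval rfl fun _ _ _ _ _ ↦ by
    rw [eval_map, eval_restrict, eval_restrict, eval_map]

lemma map_injective (f : U ⟶ X) [Mono f] :
    Function.Injective (map f : Jet_s0 p (f ≫ sX) Z → Jet_s0 p sX Z) := by
  rintro ⟨s, g, hg⟩ ⟨s', g', hg'⟩ h
  obtain rfl : s = s' := congr(($h).base)
  obtain rfl : g = g' := by simpa [map, cancel_mono] using h
  rfl

variable (z : S ⟶ J) (hz : z ≫ p = 𝟙 S)

/-- The centre of a jet with respect to a section `z` of `J ⟶ S`: its value along the section of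
`Z ×[S] J ⟶ Z` induced by `z`. For `m`-jets this is the value at `t = 0`. -/
noncomputable def center (x : Jet_s0 p sX Z) : Z ⟶ X :=
  x.eval (𝟙 Z) (x.base ≫ z) (by rw [Category.assoc, hz, Category.id_comp, Category.comp_id])

lemma center_comp (x : Jet_s0 p sX Z) : x.center z hz ≫ sX = x.base := by
  rw [center, eval_comp_structure, Category.id_comp]

lemma center_restrict (g : T ⟶ Z) (x : Jet_s0 p sX Z) :
    (x.restrict g).center z hz = g ≫ x.center z hz := by
  rw [center, center, comp_eval, eval_restrict]
  exact eval_congr rfl (by simp) (by simp) _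

lemma center_map (f : U ⟶ X) (x : Jet_s0 p (f ≫ sX) Z) :
    (x.map f).center z hz = x.center z hz ≫ f :=
  eval_map f x _ _ _

lemma isPullback_lift_section (s : Z ⟶ S) :
    IsPullback (pullback.lift (𝟙 Z) (s ≫ z)
      (by rw [Category.assoc, hz, Category.id_comp, Category.comp_id])) s (pullback.snd s p) z :=
  have outer : IsPullback (𝟙 Z) s s (𝟙 S) := .of_horiz_isIso ⟨by simp⟩
  .of_right (by rwa [pullback.lift_fst, hz]) (pullback.lift_snd _ _ _)
    (IsPullback.of_hasPullback s p)

lemma range_hom_eq_range_center [Surjective z] (x : Jet_s0 p sX Z) :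
    Set.range x.hom = Set.range (x.center z hz) := by
  have := MorphismProperty.of_isPullback (P := @Surjective)
    (isPullback_lift_section z hz x.base).flip ‹_›
  rw [center, eval, Scheme.Hom.comp_base, TopCat.coe_comp,
    (Scheme.Hom.surjective _).range_comp]

lemma exists_map_eq (f : U ⟶ X) [IsOpenImmersion f] [Surjective z] (x : Jet_s0 p sX Z) (c : Z ⟶ U)
    (hc : c ≫ f = x.center z hz) : ∃ y : Jet_s0 p (f ≫ sX) Z, y.map f = x := by
  have hrange : Set.range x.hom ⊆ Set.range f := by
    rw [range_hom_eq_range_center z hz, ← hc, Scheme.Hom.comp_base, TopCat.coe_comp]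
    exact Set.range_comp_subset_range _ _
  refine ⟨⟨x.base, IsOpenImmersion.lift f x.hom hrange, ?_⟩, ?_⟩
  · rw [IsOpenImmersion.lift_fac_assoc, x.w]
  · simp only [map, IsOpenImmersion.lift_fac]

end Jet_s0

/-- Postcomposition with an `S`-morphism, as a morphism of jet functors. -/
noncomputable def jetFunctorMap (p : J ⟶ S) {U : Scheme.{u}} (f : U ⟶ X) (sX : X ⟶ S) :
    jetFunctor p (f ≫ sX) ⟶ jetFunctor p sX where
  app _ := TypeCat.ofHom (Jet_s0.map f)
  naturality _ _ g := by
    ext x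
    exact Jet_s0.restrict_map f g.unop x

/-- Taking centres, as a morphism from the jet functor of `X` to `X`. -/
noncomputable def jetCenter (p : J ⟶ S) (sX : X ⟶ S) (z : S ⟶ J) (hz : z ≫ p = 𝟙 S) :
    jetFunctor p sX ⟶ yoneda.obj X where
  app _ := TypeCat.ofHom (Jet_s0.center z hz)
  naturality _ _ g := by ext x; exact x.center_restrict z hz g.unop

lemma isPullback_jetFunctorMap (p : J ⟶ S) (sX : X ⟶ S) (z : S ⟶ J) (hz : z ≫ p = 𝟙 S)
    [Surjective z] {U : Scheme.{u}} (f : U ⟶ X) [IsOpenImmersion f] :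
    IsPullback (jetFunctorMap p f sX) (jetCenter p (f ≫ sX) z hz) (jetCenter p sX z hz)
      (yoneda.map f) := by
  refine .of_forall_isPullback_app fun Z ↦ (Types.isPullback_iff _ _ _ _).mpr ⟨?_, ?_, ?_⟩
  · ext x
    exact Jet_s0.center_map z hz f x
  · exact fun x y h ↦ Jet_s0.map_injective f h.1
  · intro x c hc
    obtain ⟨y, hy⟩ := Jet_s0.exists_map_eq z hz f x c hc.symm
    refine ⟨y, hy, ?_⟩
    rw [← cancel_mono f]
    exact (Jet_s0.center_map z hz f y).symm.trans (congr(Jet_s0.center z hz $hy).trans hc)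

end Jets

instance isCoverDense_Spec : Scheme.Spec.{u}.IsCoverDense Scheme.zariskiTopology where
  is_cover Z := by
    refine GrothendieckTopology.superset_covering _ ?_
      Z.affineCover.mem_grothendieckTopology
    rw [Sieve.generate_le_iff]
    rintro _ _ ⟨i⟩
    exact ⟨⟨Opposite.op (Z.affineOpenCover.X i), 𝟙 _, Z.affineCover.f i, Category.id_comp _⟩⟩

lemma isIso_of_bijective_app_Spec {F G : Sheaf Scheme.zariskiTopology.{u} (Type u)} (α : F ⟶ G)
    (h : ∀ C : CommRingCat.{u}, Function.Bijective (α.hom.app (.op (Spec C)))) : IsIso α := by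
  refine Functor.IsCoverDense.iso_of_restrict_iso (G := Scheme.Spec) α ?_
  rw [NatTrans.isIso_iff_isIso_app]
  exact fun C ↦ (isIso_iff_bijective _).mpr (h C.unop.unop)

section OpenCover

variable {X X' : Scheme.{u}} (𝒰 : Scheme.OpenCover.{v} X) {V : 𝒰.I₀ → Scheme.{u}}
  {b : ∀ i, V i ⟶ X'} {π : ∀ i, V i ⟶ 𝒰.X i} {π' : X' ⟶ X}
  (h : ∀ i, IsPullback (b i) (π i) π' (𝒰.f i)) (P : MorphismProperty Scheme.{u})

include h

lemma of_isPullback_openCover_target [IsZariskiLocalAtTarget P] (hP : ∀ i, P (π i)) : P π' :=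
  (IsZariskiLocalAtTarget.iff_of_openCover 𝒰).mpr fun i ↦ by
    have := hP i
    rwa [← (h i).isoPullback_hom_snd, P.cancel_left_of_respectsIso] at this

lemma of_isPullback_openCover_source [IsZariskiLocalAtSource P] {S : Scheme.{u}} {g : X' ⟶ S}
    (hP : ∀ i, P (b i ≫ g)) : P g :=
  (IsZariskiLocalAtSource.iff_of_openCover (𝒰.pullback₁ π')).mpr fun (i : 𝒰.I₀) ↦ by
    have := hP i
    rwa [← (h i).isoPullback_hom_fst, Category.assoc, P.cancel_left_of_respectsIso] at this

end OpenCover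

section Representability

variable {X : Scheme.{u}} (𝒰 : Scheme.OpenCover.{u} X) {F : Scheme.{u}ᵒᵖ ⥤ Type u}
  {c : F ⟶ yoneda.obj X} {V : 𝒰.I₀ → Scheme.{u}} {a : ∀ i, yoneda.obj (V i) ⟶ F}
  {π : ∀ i, V i ⟶ 𝒰.X i}
  (h : ∀ i, IsPullback (a i) (yoneda.map (π i)) c (yoneda.map (𝒰.f i)))

include h

lemma isLocallySurjective_sigmaDesc_of_isPullback_openCover :
    Presheaf.IsLocallySurjective Scheme.zariskiTopology (Sigma.desc a) where
  imageSieve_mem {Z} s := by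
    let γ : Z ⟶ X := c.app _ s
    have lift_on_piece (i : 𝒰.I₀) : ∃ t, (Sigma.desc a).app (.op (pullback γ (𝒰.f i))) t =
        F.map (pullback.fst γ (𝒰.f i)).op s := by
      have hγ : c.app _ (F.map (pullback.fst γ (𝒰.f i)).op s) =
          pullback.snd γ (𝒰.f i) ≫ 𝒰.f i := by
        rw [NatTrans.naturality_apply]
        exact pullback.condition (f := γ)
      obtain ⟨t, ht, -⟩ := Types.exists_of_isPullback ((h i).app _) _ _ hγ
      refine ⟨(Sigma.ι (fun i ↦ yoneda.obj (V i)) i).app _ t, ?_⟩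
      rw [← NatTrans.comp_app_apply, Sigma.ι_desc, ht]
    refine GrothendieckTopology.superset_covering _ ?_
      (Scheme.Cover.mem_grothendieckTopology (𝒰.pullback₁ γ))
    rw [Sieve.generate_le_iff]
    rintro _ _ ⟨i⟩
    exact lift_on_piece i

theorem isRepresentable_of_isPullback_openCover
    (hF : Presheaf.IsSheaf Scheme.zariskiTopology F) : F.IsRepresentable := by
  have := MorphismProperty.relative_isStableUnderBaseChange (P := @IsOpenImmersion) (F := yoneda)
  have ha (i) : IsOpenImmersion.presheaf (a i) :=
    MorphismProperty.of_isPullback (h i).flip (MorphismProperty.relative_map inferInstance)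
  have := isLocallySurjective_sigmaDesc_of_isPullback_openCover 𝒰 h
  exact Scheme.LocalRepresentability.isRepresentable (F := ⟨F, hF⟩) ha

lemma isPullback_preimage_of_iso_yoneda {X' : Scheme.{u}} {π' : X' ⟶ X} (e : yoneda.obj X' ≅ F)
    (he : e.hom ≫ c = yoneda.map π') (i : 𝒰.I₀) :
    IsPullback (yoneda.preimage (a i ≫ e.inv)) (π i) π' (𝒰.f i) := by
  have he' : c = e.inv ≫ yoneda.map π' := by rw [← he, e.inv_hom_id_assoc]
  refine .of_map yoneda (yoneda.map_injective ?_) ?_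
  · simp [← he', (h i).w]
  · rw [yoneda.map_preimage]
    exact (h i).of_iso (.refl _) e.symm (.refl _) (.refl _) (by simp) (by simp) (by simp [he'])
      (by simp)

end Representability

section UniversalJet

variable {S J X Y : Scheme.{u}} {p : J ⟶ S} {sX : X ⟶ S}

namespace Jet_s0

/-- The jet `x` of `X` parametrised by `Y` is universal: every jet is the restriction of `x` along a
unique morphism to `Y`. -/
def IsUniversal (x : Jet_s0 p sX Y) : Prop :=
  ∀ Z : Scheme.{u}, Function.Bijective fun g : Z ⟶ Y ↦ x.restrict g

/-- The morphism of functors `g ↦ x.restrict g` given by a jet under the Yoneda lemma. -/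
noncomputable def classify (x : Jet_s0 p sX Y) : yoneda.obj Y ⟶ jetFunctor p sX :=
  yonedaEquiv.symm x

lemma isUniversal_iff_isIso {x : Jet_s0 p sX Y} : x.IsUniversal ↔ IsIso x.classify := by
  simp only [NatTrans.isIso_iff_isIso_app, isIso_iff_bijective]
  exact ⟨fun h Z ↦ h Z.unop, fun h Z ↦ h (.op Z)⟩

lemma isUniversal_of_bijective_restrict_Spec {x : Jet_s0 p sX Y}
    (h : ∀ C : CommRingCat.{u}, Function.Bijective fun g : Spec C ⟶ Y ↦ x.restrict g) :
    x.IsUniversal := by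
  let α : Scheme.zariskiTopology.yoneda.obj Y ⟶ ⟨jetFunctor p sX, isSheaf_jetFunctor p sX⟩ :=
    ⟨x.classify⟩
  have : IsIso α := isIso_of_bijective_app_Spec α h
  exact isUniversal_iff_isIso.mpr (inferInstanceAs (IsIso ((sheafToPresheaf _ _).map α)))

lemma classify_comp_jetCenter (x : Jet_s0 p sX Y) (z : S ⟶ J) (hz : z ≫ p = 𝟙 S) :
    x.classify ≫ jetCenter p sX z hz = yoneda.map (x.center z hz) := by
  ext Z g
  exact center_restrict z hz g x

end Jet_s0

end UniversalJet

section AffineJet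

variable {k R A B C : Type u} [CommRing k] [CommRing R] [Algebra k R] [CommRing A] [Algebra k A]
  [CommRing B] [Algebra k B] [CommRing C] [Algebra k C]

lemma lift_pullbackSpecIso_hom_map (f : B →ₐ[k] C) {T : Scheme.{u}} (a : T ⟶ Spec (.of C))
    (q : T ⟶ Spec (.of R))
    (h : a ≫ Spec.map (CommRingCat.ofHom (algebraMap k C)) =
      q ≫ Spec.map (CommRingCat.ofHom (algebraMap k R)))
    (h' : (a ≫ Spec.map (CommRingCat.ofHom f.toRingHom)) ≫
      Spec.map (CommRingCat.ofHom (algebraMap k B)) =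
        q ≫ Spec.map (CommRingCat.ofHom (algebraMap k R))) :
    pullback.lift a q h ≫ (pullbackSpecIso k C R).hom ≫
        Spec.map (CommRingCat.ofHom (Algebra.TensorProduct.map f (AlgHom.id k R)).toRingHom) =
      pullback.lift (a ≫ Spec.map (CommRingCat.ofHom f.toRingHom)) q h' ≫
        (pullbackSpecIso k B R).hom := by
  have map_fst : Spec.map (CommRingCat.ofHom (Algebra.TensorProduct.map f (.id k R)).toRingHom) ≫
      (pullbackSpecIso k B R).inv ≫ pullback.fst _ _ =
      (pullbackSpecIso k C R).inv ≫ pullback.fst _ _ ≫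
        Spec.map (CommRingCat.ofHom f.toRingHom) := by
    rw [pullbackSpecIso_inv_fst, pullbackSpecIso_inv_fst_assoc, ← Spec.map_comp, ← Spec.map_comp]
    rfl
  have map_snd : Spec.map (CommRingCat.ofHom (Algebra.TensorProduct.map f (.id k R)).toRingHom) ≫
      (pullbackSpecIso k B R).inv ≫ pullback.snd _ _ =
      (pullbackSpecIso k C R).inv ≫ pullback.snd _ _ := by
    rw [pullbackSpecIso_inv_snd, pullbackSpecIso_inv_snd, ← Spec.map_comp]
    congr 1
    ext
    simp
  rw [← cancel_mono (pullbackSpecIso k B R).inv]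
  refine pullback.hom_ext ?_ ?_
  · simp only [Category.assoc, map_fst, Iso.hom_inv_id_assoc, pullback.lift_fst_assoc,
      pullback.lift_fst]
  · simp only [Category.assoc, map_snd, Iso.hom_inv_id_assoc, pullback.lift_snd]

namespace Jet_s0

variable (k R A C) in
/-- The `Spec R`-jets of `Spec A` over `Spec k` parametrised by `Spec C`, possibly with a structure
morphism `Spec C ⟶ Spec k` other than the one given by the algebra structure of `C`. -/
abbrev AffineJet :=
  Jet_s0 (Spec.map (CommRingCat.ofHom (algebraMap k R)))
    (Spec.map (CommRingCat.ofHom (algebraMap k A))) (Spec (.of C))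

/-- The jet corresponding to an algebra homomorphism under
`Spec C ×[Spec k] Spec R ≅ Spec (C ⊗ R)`. -/
noncomputable def ofAlgHom (φ : A →ₐ[k] C ⊗[k] R) : AffineJet k R A C where
  base := Spec.map (CommRingCat.ofHom (algebraMap k C))
  hom := (pullbackSpecIso k C R).hom ≫ Spec.map (CommRingCat.ofHom φ.toRingHom)
  w := by
    rw [Category.assoc, ← Iso.eq_inv_comp, pullbackSpecIso_inv_fst_assoc, ← Spec.map_comp,
      ← Spec.map_comp]
    congr 1
    ext x
    simp

@[simp]
lemma ofAlgHom_base (φ : A →ₐ[k] C ⊗[k] R) :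
    (ofAlgHom φ).base = Spec.map (CommRingCat.ofHom (algebraMap k C)) :=
  rfl

lemma ofAlgHom_injective :
    Function.Injective (ofAlgHom : (A →ₐ[k] C ⊗[k] R) → AffineJet k R A C) := by
  intro φ ψ h
  have hom_eq : (ofAlgHom φ).hom = (ofAlgHom ψ).hom := by injection h
  simp only [ofAlgHom, cancel_epi] at hom_eq
  exact AlgHom.ext fun a ↦ congr(($(Spec.map_injective hom_eq)).hom a)

lemma exists_ofAlgHom_eq (x : AffineJet k R A C)
    (hx : x.base = Spec.map (CommRingCat.ofHom (algebraMap k C))) :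
    ∃ φ, ofAlgHom φ = x := by
  obtain ⟨s, f, hf⟩ := x
  obtain rfl : s = _ := hx
  obtain ⟨φ, hφ⟩ := Spec.map_surjective ((pullbackSpecIso k C R).inv ≫ f)
  refine ⟨⟨φ.hom, fun r ↦ ?_⟩, ?_⟩
  · have algebraMap_comp : CommRingCat.ofHom (algebraMap k A) ≫ φ =
        CommRingCat.ofHom (algebraMap k (C ⊗[k] R)) := by
      apply Spec.map_injective
      rw [Spec.map_comp, hφ, Category.assoc, hf, pullbackSpecIso_inv_fst_assoc, ← Spec.map_comp]
      rfl
    exact congr(($algebraMap_comp).hom r)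
  · simp only [ofAlgHom]
    congr 1
    rw [← Iso.eq_inv_comp, ← hφ]
    rfl

lemma restrict_ofAlgHom (φ : A →ₐ[k] B ⊗[k] R) (f : B →ₐ[k] C) :
    (ofAlgHom φ).restrict (Spec.map (CommRingCat.ofHom f.toRingHom)) =
      ofAlgHom ((Algebra.TensorProduct.map f (AlgHom.id k R)).comp φ) := by
  have base_eq : Spec.map (CommRingCat.ofHom f.toRingHom) ≫
      Spec.map (CommRingCat.ofHom (algebraMap k B)) =
      Spec.map (CommRingCat.ofHom (algebraMap k C)) := by
    rw [← Spec.map_comp, ← CommRingCat.ofHom_comp]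
    exact congr(Spec.map (CommRingCat.ofHom $(f.comp_algebraMap)))
  refine ext_eval base_eq fun T a q h h' ↦ ?_
  have hB : (a ≫ Spec.map (CommRingCat.ofHom f.toRingHom)) ≫
      Spec.map (CommRingCat.ofHom (algebraMap k B)) =
        q ≫ Spec.map (CommRingCat.ofHom (algebraMap k R)) := by rw [Category.assoc, ← h]; rfl
  rw [eval_restrict]
  calc (ofAlgHom φ).eval _ q hB
    _ = (pullback.lift _ q hB ≫ (pullbackSpecIso k B R).hom) ≫
          Spec.map (CommRingCat.ofHom φ.toRingHom) := (Category.assoc _ _ _).symm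
    _ = pullback.lift a q h' ≫ (pullbackSpecIso k C R).hom ≫
          Spec.map (CommRingCat.ofHom
            ((Algebra.TensorProduct.map f (AlgHom.id k R)).comp φ).toRingHom) := by
      rw [← lift_pullbackSpecIso_hom_map f a q h', Category.assoc, Category.assoc, ← Spec.map_comp]
      rfl

end Jet_s0

end AffineJet

section UniversalAffineJet

variable {k R A B C : Type u} [CommRing k] [CommRing R] [Algebra k R] [CommRing A] [Algebra k A]
  [CommRing B] [Algebra k B] [CommRing C] [Algebra k C]

lemma exists_algHom_Spec_map_eq (g : Spec (.of C) ⟶ Spec (.of B))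
    (hg : g ≫ Spec.map (CommRingCat.ofHom (algebraMap k B)) =
      Spec.map (CommRingCat.ofHom (algebraMap k C))) :
    ∃ f : B →ₐ[k] C, Spec.map (CommRingCat.ofHom f.toRingHom) = g := by
  obtain ⟨f, rfl⟩ := Spec.map_surjective g
  rw [← Spec.map_comp] at hg
  exact ⟨⟨f.hom, fun r ↦ congr(($(Spec.map_injective hg)).hom r)⟩, rfl⟩

namespace Jet_s0

lemma isUniversal_ofAlgHom (υ : A →ₐ[k] B ⊗[k] R)
    (h : ∀ (C : Type u) [CommRing C] [Algebra k C], Function.Bijective fun f : B →ₐ[k] C ↦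
      (Algebra.TensorProduct.map f (AlgHom.id k R)).comp υ) :
    (ofAlgHom υ).IsUniversal := by
  refine isUniversal_of_bijective_restrict_Spec fun C ↦
    (Function.bijective_iff_existsUnique _).mpr fun y ↦ ?_
  obtain ⟨φ, hφ⟩ := Spec.map_surjective y.base
  let : Algebra k C := φ.hom.toAlgebra
  obtain ⟨ψ, rfl⟩ := exists_ofAlgHom_eq y hφ.symm
  obtain ⟨f, hf, huniq⟩ := (Function.bijective_iff_existsUnique _).mp (h C) ψ
  refine ⟨Spec.map (CommRingCat.ofHom f.toRingHom),
    (restrict_ofAlgHom υ f).trans congr(ofAlgHom $hf), fun g hg ↦ ?_⟩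
  obtain ⟨f', rfl⟩ := exists_algHom_Spec_map_eq g congr(($hg).base)
  rw [huniq f' (ofAlgHom_injective ((restrict_ofAlgHom υ f').symm.trans hg))]

lemma exists_isUniversal_Spec [Module.Free k R] [Module.Finite k R] {A : CommRingCat.{u}}
    (sA : Spec A ⟶ Spec (.of k)) :
    ∃ (B : CommRingCat.{u})
      (x : Jet_s0 (Spec.map (CommRingCat.ofHom (algebraMap k R))) sA (Spec B)),
      x.IsUniversal ∧ (LocallyOfFiniteType sA → LocallyOfFiniteType x.base) := by
  obtain ⟨φ, rfl⟩ := Spec.map_surjective sA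
  let : Algebra k A := φ.hom.toAlgebra
  obtain ⟨B, _, _, υ, hfin, hυ⟩ := exists_universal_algHom_tensorProduct k R A
  refine ⟨.of B, ofAlgHom υ, isUniversal_ofAlgHom υ hυ, ?_⟩
  rw [ofAlgHom_base, HasRingHomProperty.Spec_iff (P := @LocallyOfFiniteType),
    HasRingHomProperty.Spec_iff (P := @LocallyOfFiniteType)]
  exact fun h ↦ RingHom.finiteType_algebraMap.mpr (hfin h)

end Jet_s0

end UniversalAffineJet

section Existence

variable {S J X Y Z : Scheme.{u}} {p : J ⟶ S} {sX : X ⟶ S}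

namespace Jet_s0

theorem exists_isUniversal_of_openCover (z : S ⟶ J) (hz : z ≫ p = 𝟙 S) [Surjective z]
    (𝒰 : Scheme.OpenCover.{u} X) {V : 𝒰.I₀ → Scheme.{u}}
    {x : ∀ i, Jet_s0 p (𝒰.f i ≫ sX) (V i)} (hx : ∀ i, (x i).IsUniversal) :
    ∃ (Y : Scheme.{u}) (y : Jet_s0 p sX Y) (b : ∀ i, V i ⟶ Y), y.IsUniversal ∧
      ∀ i, IsPullback (b i) ((x i).center z hz) (y.center z hz) (𝒰.f i) := by
  have square (i : 𝒰.I₀) : IsPullback ((x i).classify ≫ jetFunctorMap p (𝒰.f i) sX)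
      (yoneda.map ((x i).center z hz)) (jetCenter p sX z hz) (yoneda.map (𝒰.f i)) := by
    have := isUniversal_iff_isIso.mp (hx i)
    exact (isPullback_jetFunctorMap p sX z hz (𝒰.f i)).of_iso (asIso (x i).classify).symm
      (.refl _) (.refl _) (.refl _) (by simp) (by simp [← classify_comp_jetCenter]) (by simp)
      (by simp)
  have := isRepresentable_of_isPullback_openCover 𝒰 square (isSheaf_jetFunctor p sX)
  let e := (jetFunctor p sX).reprW
  let y : Jet_s0 p sX _ := yonedaEquiv e.hom
  have hy : y.classify = e.hom := yonedaEquiv.symm_apply_apply _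
  refine ⟨_, y, _, isUniversal_iff_isIso.mpr (hy ▸ inferInstance), fun i ↦
    isPullback_preimage_of_iso_yoneda 𝒰 square e ?_ i⟩
  rw [← hy, classify_comp_jetCenter]

end Jet_s0

lemma Jet_s0.restrict_hom (g : Z ⟶ Y) (x : Jet_s0 p sX Y) :
    (x.restrict g).hom = pullback.map (g ≫ x.base) p x.base p g (𝟙 J) (𝟙 S)
      (Category.comp_id _) (by simp) ≫ x.hom := by
  simp only [restrict, eval, pullback.map, Category.comp_id]

lemma Jet_s0.restrict_eq_iff {g : Z ⟶ Y} {x : Jet_s0 p sX Y} {y : Jet_s0 p sX Z} :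
    x.restrict g = y ↔ ∃ hg : g ≫ x.base = y.base,
      pullback.map y.base p x.base p g (𝟙 J) (𝟙 S) (by rw [Category.comp_id, hg]) (by simp) ≫
        x.hom = y.hom := by
  constructor
  · rintro rfl
    exact ⟨rfl, (x.restrict_hom g).symm⟩
  · obtain ⟨s, f, w⟩ := y
    rintro ⟨hs, hf⟩
    obtain rfl : g ≫ x.base = s := hs
    obtain rfl : (x.restrict g).hom = f := (x.restrict_hom g).trans hf
    rfl

lemma Jet_s0.IsUniversal.existsUnique {x : Jet_s0 p sX Y} (hx : x.IsUniversal)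
    (sZ : Z ⟶ S) (h : pullback sZ p ⟶ X) (w : h ≫ sX = pullback.fst sZ p ≫ sZ) :
    ∃! g : {g : Z ⟶ Y // g ≫ x.base = sZ}, pullback.map sZ p x.base p g.1 (𝟙 J) (𝟙 S)
      (by rw [Category.comp_id, g.2]) (by simp) ≫ x.hom = h := by
  obtain ⟨g, hg, huniq⟩ := (Function.bijective_iff_existsUnique _).mp (hx Z) ⟨sZ, h, w⟩
  obtain ⟨g_base, g_hom⟩ := restrict_eq_iff.mp hg
  exact ⟨⟨g, g_base⟩, g_hom, fun g' h' ↦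
    Subtype.ext (huniq g' (restrict_eq_iff.mpr ⟨g'.2, h'⟩))⟩

theorem exists_isUniversal_jet {k R : Type u} [CommRing k] [CommRing R] [Algebra k R]
    [Module.Free k R] [Module.Finite k R] (z : Spec (.of k) ⟶ Spec (.of R))
    (hz : z ≫ Spec.map (CommRingCat.ofHom (algebraMap k R)) = 𝟙 _) [Surjective z] {X : Scheme.{u}}
    (sX : X ⟶ Spec (.of k)) :
    ∃ (Y : Scheme.{u}) (y : Jet_s0 (Spec.map (CommRingCat.ofHom (algebraMap k R))) sX Y),
      y.IsUniversal ∧ IsAffineHom (y.center z hz) ∧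
      (LocallyOfFiniteType sX → LocallyOfFiniteType y.base) := by
  have local_jet (i : X.affineCover.I₀) : ∃ (V : Scheme.{u})
      (x : Jet_s0 (Spec.map (CommRingCat.ofHom (algebraMap k R))) (X.affineCover.f i ≫ sX) V),
      IsAffine V ∧ x.IsUniversal ∧ (LocallyOfFiniteType sX → LocallyOfFiniteType x.base) := by
    obtain ⟨B, x, hx, hfin⟩ := Jet_s0.exists_isUniversal_Spec (R := R) (X.affineCover.f i ≫ sX)
    exact ⟨Spec B, x, inferInstance, hx, fun _ ↦
      hfin (inferInstanceAs (LocallyOfFiniteType (X.affineCover.f i ≫ sX)))⟩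
  choose V x hV hx hfin using local_jet
  obtain ⟨Y, y, b, hy, square⟩ := Jet_s0.exists_isUniversal_of_openCover z hz X.affineCover hx
  refine ⟨Y, y, hy, ?_, fun hsX ↦ ?_⟩
  · have : IsZariskiLocalAtTarget (@IsAffineHom.{u}) :=
      instHasAffinePropertyIsAffineHomIsAffine.instIsZariskiLocalAtTarget
    exact of_isPullback_openCover_target X.affineCover square @IsAffineHom inferInstance
  · have : IsZariskiLocalAtSource (@LocallyOfFiniteType.{u}) :=
      HasRingHomProperty.instIsZariskiLocalAtSource
    refine of_isPullback_openCover_source X.affineCover square @LocallyOfFiniteType fun i ↦ ?_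
    have base_eq : b i ≫ y.base = (x i).base := by
      rw [← y.center_comp z hz, (square i).w_assoc, Jet_s0.center_comp]
    rw [base_eq]
    exact hfin i hsX

theorem jet_scheme_representable_general {k R : Type u} [CommRing k] [CommRing R] [Algebra k R]
    [Module.Free k R] [Module.Finite k R] (z : Spec (.of k) ⟶ Spec (.of R))
    (hz : z ≫ Spec.map (CommRingCat.ofHom (algebraMap k R)) = 𝟙 _) [Surjective z] {X : Scheme.{u}}
    (sX : X ⟶ Spec (.of k)) :
    let p := Spec.map (CommRingCat.ofHom (algebraMap k R))
    ∃ (Y : Scheme.{u}) (π : Y ⟶ X), IsAffineHom π ∧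
      (LocallyOfFiniteType sX → LocallyOfFiniteType (π ≫ sX)) ∧
      ∃ u : pullback (π ≫ sX) p ⟶ X, u ≫ sX = pullback.fst (π ≫ sX) p ≫ π ≫ sX ∧
        ∀ (Z : Scheme.{u}) (sZ : Z ⟶ Spec (.of k)) (h : pullback sZ p ⟶ X),
          h ≫ sX = pullback.fst sZ p ≫ sZ →
          ∃! g : {g : Z ⟶ Y // g ≫ π ≫ sX = sZ},
            pullback.map sZ p (π ≫ sX) p g.1 (𝟙 _) (𝟙 _)
              (by rw [Category.comp_id, g.2]) (by simp) ≫ u = h := by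
  obtain ⟨Y, y, hy, haff, hfin⟩ := exists_isUniversal_jet z hz sX
  refine ⟨Y, y.center z hz, haff, ?_⟩
  rw [y.center_comp]
  exact ⟨hfin, y.hom, y.w, fun _ ↦ hy.existsUnique⟩

end Existence

lemma surjective_jetZero (k : Type) [Field k] (m : ℕ) : Surjective (jetZero k m) := by
  refine ⟨(PrimeSpectrum.isHomeomorph_comap _ (fun c ↦ ⟨1, one_pos, algebraMap k _ c, ?_⟩)
    fun x hx ↦ ?_).surjective⟩
  · simp
  · obtain ⟨q, rfl⟩ := Ideal.Quotient.mk_surjective x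
    have X_dvd : Polynomial.X ∣ q := by
      rw [Polynomial.X_dvd_iff, Polynomial.coeff_zero_eq_aeval_zero]
      exact hx
    refine mem_nilradical.mpr ⟨m + 1, ?_⟩
    rw [← map_pow, Ideal.Quotient.eq_zero_iff_mem, Ideal.mem_span_singleton]
    exact pow_dvd_pow_of_dvd X_dvd _

instance (k : Type) [Field k] (m : ℕ) : Module.Finite k (JetRing k m) :=
  (Polynomial.monic_X_pow (m + 1)).finite_quotient

open AlgebraicGeometry CategoryTheory Limits in
/-- For a field `k`, a scheme `X` of finite type over `k` and `m ∈ ℕ`,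
the `m`-jet functor `Z ↦ Hom_k(Z ×_{Spec k} Spec(k[t]/(t^{m+1})), X)` is representable
by a scheme `X_m` of finite type over `k`: there are `X_m`, a structure morphism
`sXm : X_m → Spec k` of finite type, and a universal `k`-morphism
`u : X_m ×_{Spec k} Spec(k[t]/(t^{m+1})) → X` such that for every `k`-scheme `Z`,
`g ↦ u ∘ (g × id)` is a bijection from `Hom_k(Z, X_m)` to
`Hom_k(Z ×_{Spec k} Spec(k[t]/(t^{m+1})), X)` (expressed as: every `k`-morphism
`h : Z ×_{Spec k} Spec(k[t]/(t^{m+1})) → X` has a unique preimage). -/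
theorem jet_scheme_representable (k : Type) [Field k] (m : ℕ)
    (X : Scheme) (sX : X ⟶ Speck k) [LocallyOfFiniteType sX] [QuasiCompact sX] :
    ∃ (Xm : Scheme) (sXm : Xm ⟶ Speck k),
      LocallyOfFiniteType sXm ∧ QuasiCompact sXm ∧
      ∃ u : pullback sXm (jetStruct k m) ⟶ X,
        u ≫ sX = pullback.fst sXm (jetStruct k m) ≫ sXm ∧
        ∀ (Z : Scheme) (sZ : Z ⟶ Speck k) (h : pullback sZ (jetStruct k m) ⟶ X),
          h ≫ sX = pullback.fst sZ (jetStruct k m) ≫ sZ →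
          ∃! g : { g : Z ⟶ Xm // g ≫ sXm = sZ },
            pullback.map sZ (jetStruct k m) sXm (jetStruct k m) g.1
              (𝟙 (JetSpec k m)) (𝟙 (Speck k))
              (by rw [Category.comp_id, g.2]) (by simp) ≫ u = h :=
  have := surjective_jetZero k m
  have ⟨Y, π, _, hfin, hY⟩ := jet_scheme_representable_general _ (jetZero_jetStruct k m) sX
  ⟨Y, π ≫ sX, hfin inferInstance, inferInstance, hY⟩
end

section
/- Let k be a field, m a natural number, and R a finitely generated commutative k-algebra. Then there exist a finitely generated commutative k-algebra R_m and bijections Hom_{k-alg}(R_m, A) ≅ Hom_{k-alg}(R, A[t]/(t^{m+1})), natural in the commutative k-algebra A; that is, the covariant functor A ↦ Hom_{k-alg}(R, A[t]/(t^{m+1})) from commutative k-algebras to sets is corepresentable by a finitely generated k-algebra. -/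
/-! Jet algebras: `Jet A m = A[t]/(t^{m+1})`. -/

/-- The `m`-jet algebra `A[t]/(t^{m+1})` of a commutative ring `A`. -/
abbrev Jet (A : Type) [CommRing A] (m : ℕ) : Type :=
  Polynomial A ⧸ Ideal.span {(Polynomial.X : Polynomial A) ^ (m + 1)}

/-- The functorial map `A[t]/(t^{m+1}) → B[t]/(t^{m+1})` induced by a `k`-algebra
homomorphism `f : A → B` (apply `f` to coefficients). -/
noncomputable def jetMap {k A B : Type} [CommRing k] [CommRing A] [CommRing B]
    [Algebra k A] [Algebra k B] (m : ℕ) (f : A →ₐ[k] B) : Jet A m →ₐ[k] Jet B m :=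
  Ideal.Quotient.liftₐ _
    ((Ideal.Quotient.mkₐ k _).comp (Polynomial.mapAlgHom f))
    (by
      intro p hp
      rw [Ideal.mem_span_singleton] at hp
      obtain ⟨q, rfl⟩ := hp
      rw [AlgHom.comp_apply, Ideal.Quotient.mkₐ_eq_mk, Ideal.Quotient.eq_zero_iff_mem,
        Ideal.mem_span_singleton]
      exact ⟨q.map f, by simp [Polynomial.mapAlgHom]⟩)

/-! A homomorphism `R → A[t]/(t^{m+1})` is the same as the family of its coefficient functions
`d_j : R → A`, `j ≤ m`, and being a homomorphism amounts to polynomial identities between the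
values `d_j r`. Taking those values as generators and those identities as relations gives an
algebra corepresenting the functor. By Leibniz's rule the `r` for which all `d_j r` lie in a fixed
subalgebra form a subalgebra of `R`, so that the `d_j r` with `r` in a generating set of `R` already
generate. -/

namespace Jet

section Coefficients

variable {A : Type} [CommRing A] {m : ℕ}

theorem mk_eq_mk_iff (p q : Polynomial A) :
    (Ideal.Quotient.mk _ p : Jet A m) = Ideal.Quotient.mk _ q ↔
      ∀ j : Fin (m + 1), p.coeff j = q.coeff j := by
  simp only [Ideal.Quotient.eq, Ideal.mem_span_singleton, Polynomial.X_pow_dvd_iff,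
    Polynomial.coeff_sub, sub_eq_zero, Fin.forall_iff]

/-- The coefficient of `t^j` in a jet, as a linear map. -/
noncomputable def coeff (j : Fin (m + 1)) : Jet A m →ₗ[A] A where
  toFun := Quotient.lift (fun p : Polynomial A ↦ p.coeff j) fun p q h ↦
    (mk_eq_mk_iff p q).1 (Quotient.sound h) j
  map_add' := by
    rintro ⟨p⟩ ⟨q⟩
    exact Polynomial.coeff_add p q j
  map_smul' := by
    rintro a ⟨p⟩
    exact Polynomial.coeff_smul a p j

theorem coeff_mk (j : Fin (m + 1)) (p : Polynomial A) :
    coeff j (Ideal.Quotient.mk _ p : Jet A m) = p.coeff j :=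
  rfl

theorem ext {x y : Jet A m} (h : ∀ j, coeff j x = coeff j y) : x = y := by
  obtain ⟨p, rfl⟩ := Ideal.Quotient.mk_surjective x
  obtain ⟨q, rfl⟩ := Ideal.Quotient.mk_surjective y
  simp only [coeff_mk] at h
  exact (mk_eq_mk_iff p q).2 h

open Classical in
/-- The jet `a 0 + a 1 * t + ⋯ + a m * t^m`. -/
noncomputable def ofCoeff (a : Fin (m + 1) → A) : Jet A m :=
  Ideal.Quotient.mk _ (Polynomial.ofFn (m + 1) a)

theorem coeff_ofCoeff (a : Fin (m + 1) → A) (j : Fin (m + 1)) : coeff j (ofCoeff a) = a j := by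
  classical
  rw [ofCoeff, coeff_mk, Polynomial.ofFn_coeff_eq_val_of_lt a j.isLt]

end Coefficients

section Map

variable {k A B C : Type} [CommRing k] [CommRing A] [CommRing B] [CommRing C]
  [Algebra k A] [Algebra k B] [Algebra k C] {m : ℕ}

theorem coeff_jetMap (f : A →ₐ[k] B) (x : Jet A m) (j : Fin (m + 1)) :
    coeff j (jetMap m f x) = f (coeff j x) := by
  obtain ⟨p, rfl⟩ := Ideal.Quotient.mk_surjective x
  exact Polynomial.coeff_map (f : A →+* B) j

theorem jetMap_comp (g : B →ₐ[k] C) (f : A →ₐ[k] B) :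
    jetMap m (g.comp f) = (jetMap m g).comp (jetMap m f) :=
  AlgHom.ext fun x ↦ ext fun j ↦ by simp only [AlgHom.comp_apply, coeff_jetMap]

theorem mem_range_jetMap_iff (f : A →ₐ[k] B) (x : Jet B m) :
    x ∈ (jetMap m f).range ↔ ∀ j, coeff j x ∈ f.range := by
  constructor
  · rintro ⟨y, rfl⟩ j
    exact ⟨coeff j y, (coeff_jetMap f y j).symm⟩
  · intro h
    choose a ha using h
    refine ⟨ofCoeff a, ext fun j ↦ ?_⟩
    exact (coeff_jetMap f _ j).trans ((congrArg f (coeff_ofCoeff a j)).trans (ha j))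

end Map

section Generic

variable (k σ : Type) [CommRing k] (m : ℕ)

/-- Evaluation of polynomials at generic jets: the variable `i` is sent to the jet whose
coefficients are the indeterminates `(i, j)`. -/
noncomputable def evalGeneric : MvPolynomial σ k →ₐ[k] Jet (MvPolynomial (σ × Fin (m + 1)) k) m :=
  MvPolynomial.aeval fun i ↦ ofCoeff fun j ↦ MvPolynomial.X (i, j)

theorem coeff_evalGeneric_X (i : σ) (j : Fin (m + 1)) :
    coeff j (evalGeneric k σ m (MvPolynomial.X i)) = MvPolynomial.X (i, j) := by
  rw [evalGeneric, MvPolynomial.aeval_X, coeff_ofCoeff]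

variable {k σ m} {A : Type} [CommRing A] [Algebra k A]

/-- The specialization of the indeterminates `(i, j)` under which the generic jets become the
values of `g` on the variables. -/
noncomputable def specialization (g : MvPolynomial σ k →ₐ[k] Jet A m) :
    MvPolynomial (σ × Fin (m + 1)) k →ₐ[k] A :=
  MvPolynomial.aeval fun d ↦ coeff d.2 (g (MvPolynomial.X d.1))

theorem jetMap_specialization_comp_evalGeneric (g : MvPolynomial σ k →ₐ[k] Jet A m) :
    (jetMap m (specialization g)).comp (evalGeneric k σ m) = g := by
  refine MvPolynomial.algHom_ext fun i ↦ ext fun j ↦ ?_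
  rw [AlgHom.comp_apply, coeff_jetMap, coeff_evalGeneric_X, specialization, MvPolynomial.aeval_X]

theorem specialization_coeff_evalGeneric (g : MvPolynomial σ k →ₐ[k] Jet A m) (p : MvPolynomial σ k)
    (j : Fin (m + 1)) : specialization g (coeff j (evalGeneric k σ m p)) = coeff j (g p) := by
  rw [← coeff_jetMap, ← AlgHom.comp_apply, jetMap_specialization_comp_evalGeneric]

end Generic

end Jet

section HasseSchmidt

variable (k R : Type) [CommRing k] [CommRing R] [Algebra k R] (m : ℕ)

/-- The canonical presentation of `R` by the polynomial ring on all its elements. -/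
noncomputable def tautologicalPresentation : MvPolynomial R k →ₐ[k] R :=
  MvPolynomial.aeval id

theorem tautologicalPresentation_X (r : R) :
    tautologicalPresentation k R (MvPolynomial.X r) = r :=
  MvPolynomial.aeval_X id r

theorem tautologicalPresentation_surjective :
    Function.Surjective (tautologicalPresentation k R) :=
  fun r ↦ ⟨MvPolynomial.X r, tautologicalPresentation_X k R r⟩

/-- The ideal generated by the coefficients of the generic jets of all relations in `R`. -/
noncomputable def hasseSchmidtIdeal : Ideal (MvPolynomial (R × Fin (m + 1)) k) :=
  Ideal.span {a | ∃ p ∈ RingHom.ker (tautologicalPresentation k R), ∃ j,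
    Jet.coeff j (Jet.evalGeneric k R m p) = a}

/-- The Hasse–Schmidt algebra of order `m` of `R` over `k`, which corepresents the jet functor
`A ↦ Hom(R, A[t]/(t^{m+1}))`. The variable `(r, j)` stands for the `j`-th higher differential
`d_j r`. -/
abbrev HasseSchmidtAlgebra : Type :=
  MvPolynomial (R × Fin (m + 1)) k ⧸ hasseSchmidtIdeal k R m

namespace HasseSchmidtAlgebra

/-- The quotient map from the polynomial ring in the symbols `d_j r`. -/
noncomputable abbrev mk : MvPolynomial (R × Fin (m + 1)) k →ₐ[k] HasseSchmidtAlgebra k R m :=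
  Ideal.Quotient.mkₐ k (hasseSchmidtIdeal k R m)

theorem jetMap_mk_evalGeneric_eq_zero {p : MvPolynomial R k}
    (hp : p ∈ RingHom.ker (tautologicalPresentation k R)) :
    jetMap m (mk k R m) (Jet.evalGeneric k R m p) = 0 := by
  refine Jet.ext fun j ↦ ?_
  rw [Jet.coeff_jetMap, map_zero]
  exact Ideal.Quotient.eq_zero_iff_mem.2 (Ideal.subset_span ⟨p, hp, j, rfl⟩)

/-- The universal homomorphism `r ↦ d_0 r + d_1 r * t + ⋯ + d_m r * t^m` from `R` to jets. -/
noncomputable def universalJet : R →ₐ[k] Jet (HasseSchmidtAlgebra k R m) m :=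
  (tautologicalPresentation k R).liftOfSurjective (tautologicalPresentation_surjective k R)
    ((jetMap m (mk k R m)).comp (Jet.evalGeneric k R m))
    fun _ hp ↦ jetMap_mk_evalGeneric_eq_zero k R m hp

theorem universalJet_tautologicalPresentation (p : MvPolynomial R k) :
    universalJet k R m (tautologicalPresentation k R p) =
      jetMap m (mk k R m) (Jet.evalGeneric k R m p) :=
  AlgHom.liftOfSurjective_apply _ _ _ _ _

theorem coeff_universalJet (r : R) (j : Fin (m + 1)) :
    Jet.coeff j (universalJet k R m r) = mk k R m (MvPolynomial.X (r, j)) := by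
  have h := universalJet_tautologicalPresentation k R m (MvPolynomial.X r)
  rw [tautologicalPresentation_X] at h
  rw [h, Jet.coeff_jetMap, Jet.coeff_evalGeneric_X]

theorem eq_top_of_coeff_universalJet_mem (S : Subalgebra k (HasseSchmidtAlgebra k R m))
    (hS : ∀ r j, Jet.coeff j (universalJet k R m r) ∈ S) : S = ⊤ := by
  have hcomap : S.comap (mk k R m) = ⊤ := by
    rw [eq_top_iff, ← MvPolynomial.adjoin_range_X, Algebra.adjoin_le_iff]
    rintro _ ⟨⟨r, j⟩, rfl⟩
    rw [SetLike.mem_coe, Subalgebra.mem_comap, ← coeff_universalJet]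
    exact hS r j
  rw [eq_top_iff]
  intro x _
  obtain ⟨p, rfl⟩ := Ideal.Quotient.mkₐ_surjective k _ x
  exact hcomap.ge (Algebra.mem_top (x := p))

variable {k R} in
theorem adjoin_coeff_universalJet_eq_top {s : Set R} (hs : Algebra.adjoin k s = ⊤) :
    Algebra.adjoin k (Set.image2 (fun j r ↦ Jet.coeff j (universalJet k R m r)) Set.univ s) =
      ⊤ := by
  refine eq_top_of_coeff_universalJet_mem k R m _ fun r ↦ ?_
  set S := Algebra.adjoin k
    (Set.image2 (fun j r ↦ Jet.coeff j (universalJet k R m r)) Set.univ s)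
  have mem_comap_iff (r : R) : r ∈ (jetMap m S.val).range.comap (universalJet k R m) ↔
      ∀ j, Jet.coeff j (universalJet k R m r) ∈ S := by
    rw [Subalgebra.mem_comap, Jet.mem_range_jetMap_iff, Subalgebra.range_val]
  have hle : Algebra.adjoin k s ≤ (jetMap m S.val).range.comap (universalJet k R m) :=
    Algebra.adjoin_le fun r hr ↦ (mem_comap_iff r).2 fun j ↦
      Algebra.subset_adjoin (Set.mem_image2_of_mem (Set.mem_univ j) hr)
  exact (mem_comap_iff r).1 (hle (hs.ge Algebra.mem_top))

theorem finiteType [Algebra.FiniteType k R] :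
    Algebra.FiniteType k (HasseSchmidtAlgebra k R m) := by
  obtain ⟨s, hs⟩ := Algebra.FiniteType.out (R := k) (A := R)
  exact ⟨Subalgebra.fg_def.2
    ⟨_, Set.finite_univ.image2 _ s.finite_toSet, adjoin_coeff_universalJet_eq_top m hs⟩⟩

variable {k R m} {A : Type} [CommRing A] [Algebra k A]

theorem algHom_ext {φ ψ : HasseSchmidtAlgebra k R m →ₐ[k] A}
    (h : (jetMap m φ).comp (universalJet k R m) = (jetMap m ψ).comp (universalJet k R m)) :
    φ = ψ := by
  rw [← AlgHom.equalizer_eq_top]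
  refine eq_top_of_coeff_universalJet_mem k R m _ fun r j ↦ ?_
  have hr := congrArg (Jet.coeff j) (DFunLike.congr_fun h r)
  simpa only [AlgHom.comp_apply, Jet.coeff_jetMap, AlgHom.mem_equalizer] using hr

theorem hasseSchmidtIdeal_le_ker_specialization (g : R →ₐ[k] Jet A m) :
    hasseSchmidtIdeal k R m ≤
      RingHom.ker (Jet.specialization (g.comp (tautologicalPresentation k R))) := by
  rw [hasseSchmidtIdeal, Ideal.span_le]
  rintro _ ⟨p, hp, j, rfl⟩
  rw [SetLike.mem_coe, RingHom.mem_ker, Jet.specialization_coeff_evalGeneric, AlgHom.comp_apply,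
    RingHom.mem_ker.1 hp, map_zero, map_zero]

/-- The homomorphism from the Hasse–Schmidt algebra classifying `g`. -/
noncomputable def lift (g : R →ₐ[k] Jet A m) : HasseSchmidtAlgebra k R m →ₐ[k] A :=
  Ideal.Quotient.liftₐ _ (Jet.specialization (g.comp (tautologicalPresentation k R)))
    (hasseSchmidtIdeal_le_ker_specialization g)

theorem lift_mk (g : R →ₐ[k] Jet A m) (p : MvPolynomial (R × Fin (m + 1)) k) :
    lift g (mk k R m p) = Jet.specialization (g.comp (tautologicalPresentation k R)) p :=
  rfl

theorem jetMap_lift_comp_universalJet (g : R →ₐ[k] Jet A m) :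
    (jetMap m (lift g)).comp (universalJet k R m) = g := by
  refine AlgHom.ext fun r ↦ Jet.ext fun j ↦ ?_
  rw [AlgHom.comp_apply, Jet.coeff_jetMap, coeff_universalJet, lift_mk, Jet.specialization,
    MvPolynomial.aeval_X, AlgHom.comp_apply, tautologicalPresentation_X]

/-- The universal property of the Hasse–Schmidt algebra: homomorphisms to `A` correspond to
homomorphisms from `R` to jets over `A`. -/
noncomputable def homEquiv : (HasseSchmidtAlgebra k R m →ₐ[k] A) ≃ (R →ₐ[k] Jet A m) where
  toFun φ := (jetMap m φ).comp (universalJet k R m)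
  invFun := lift
  left_inv _ := algHom_ext (jetMap_lift_comp_universalJet _)
  right_inv := jetMap_lift_comp_universalJet

theorem homEquiv_comp {B : Type} [CommRing B] [Algebra k B] (f : A →ₐ[k] B)
    (φ : HasseSchmidtAlgebra k R m →ₐ[k] A) :
    homEquiv (f.comp φ) = (jetMap m f).comp (homEquiv φ) := by
  simp only [homEquiv, Equiv.coe_fn_mk, Jet.jetMap_comp, AlgHom.comp_assoc]

end HasseSchmidtAlgebra

end HasseSchmidt

theorem jet_functor_corepresentable_general (k : Type) [CommRing k] (m : ℕ)
    (R : Type) [CommRing R] [Algebra k R] :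
    ∃ (Rm : Type) (_ : CommRing Rm) (_ : Algebra k Rm)
      (_ : Algebra.FiniteType k R → Algebra.FiniteType k Rm)
      (e : ∀ (A : Type) [CommRing A] [Algebra k A], (Rm →ₐ[k] A) ≃ (R →ₐ[k] Jet A m)),
      ∀ (A B : Type) [CommRing A] [Algebra k A] [CommRing B] [Algebra k B]
        (f : A →ₐ[k] B) (φ : Rm →ₐ[k] A),
        e B (f.comp φ) = (jetMap m f).comp (e A φ) :=
  ⟨HasseSchmidtAlgebra k R m, inferInstance, inferInstance,
    fun _ ↦ HasseSchmidtAlgebra.finiteType k R m, fun _ _ _ ↦ HasseSchmidtAlgebra.homEquiv,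
    fun _ _ _ _ _ _ ↦ HasseSchmidtAlgebra.homEquiv_comp⟩

/-- For a field `k`, `m ∈ ℕ` and a finitely generated commutative
`k`-algebra `R`, the covariant functor `A ↦ Hom_{k-alg}(R, A[t]/(t^{m+1}))` is
corepresentable by a finitely generated `k`-algebra `R_m`, via bijections natural in `A`. -/
theorem jet_functor_corepresentable (k : Type) [Field k] (m : ℕ)
    (R : Type) [CommRing R] [Algebra k R] (hR : Algebra.FiniteType k R) :
    ∃ (Rm : Type) (_ : CommRing Rm) (_ : Algebra k Rm) (_ : Algebra.FiniteType k Rm)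
      (e : ∀ (A : Type) [CommRing A] [Algebra k A], (Rm →ₐ[k] A) ≃ (R →ₐ[k] Jet A m)),
      ∀ (A B : Type) [CommRing A] [Algebra k A] [CommRing B] [Algebra k B]
        (f : A →ₐ[k] B) (φ : Rm →ₐ[k] A),
        e B (f.comp φ) = (jetMap m f).comp (e A φ) := by
  obtain ⟨Rm, _, _, hfin, e, he⟩ := jet_functor_corepresentable_general k m R
  exact ⟨Rm, _, _, hfin hR, e, he⟩
end

section
/- Let k be a field and R a finitely generated commutative k-algebra. Then there exist a commutative k-algebra R_∞ and bijections Hom_{k-alg}(R_∞, A) ≅ Hom_{k-alg}(R, A[[t]]), natural in the commutative k-algebra A; that is, the covariant functor A ↦ Hom_{k-alg}(R, A[[t]]) from commutative k-algebras to sets is corepresentable. (This is the affine form of the universal property of the arc space X_∞.) -/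
/-- The `k`-algebra homomorphism `A[[t]] → B[[t]]` induced by a `k`-algebra
homomorphism `f : A → B` (apply `f` to coefficients). -/
def psMapAlgHom {k A B : Type} [CommRing k] [CommRing A] [CommRing B]
    [Algebra k A] [Algebra k B] (f : A →ₐ[k] B) : PowerSeries A →ₐ[k] PowerSeries B :=
  { PowerSeries.map (f : A →+* B) with
    commutes' := fun c => by
      simp [PowerSeries.algebraMap_apply] }

/-!
Arcs of the polynomial ring `k[x i]` are free choices of the coefficients of the series `x i (t)`,
so they are corepresented by the polynomial ring on variables `X (i, n)`. If an algebra `S` has a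
universal arc `u : S → A[[t]]` and `π : S → R` is surjective, an arc of `R` is an arc of `S` that
vanishes on `ker π`, that is, a homomorphism out of `A` that kills every coefficient of `u f` for
`f ∈ ker π`; dividing `A` by these coefficients corepresents the arcs of `R`. Finally, every
commutative algebra is a quotient of a polynomial ring.
-/

open PowerSeries

universe v₁ v₂ w

section MapAlgHom

variable {k A B C : Type*} [CommSemiring k] [Semiring A] [Semiring B] [Semiring C]
  [Algebra k A] [Algebra k B] [Algebra k C]

theorem coeff_mapAlgHom (f : A →ₐ[k] B) (x : A⟦X⟧) (n : ℕ) :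
    coeff n (mapAlgHom f x) = f (coeff n x) := by
  rw [mapAlgHom_apply, coeff_map, RingHom.coe_coe]

theorem mapAlgHom_comp (f : B →ₐ[k] C) (g : A →ₐ[k] B) :
    mapAlgHom (f.comp g) = (mapAlgHom f).comp (mapAlgHom g) := by
  ext x n
  simp only [AlgHom.comp_apply, coeff_mapAlgHom]

end MapAlgHom

/-- An arc of `S` with coefficients in `A` is a homomorphism `u : S →ₐ[k] A⟦X⟧`; it is universal if
every arc of `S` with coefficients in a commutative ring `B` over `k` is the image of `u` under
exactly one homomorphism `A → B`. The universe `w` of the test rings `B` is a parameter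
of the definition. -/
def IsUniversalArc {k S A : Type*} [CommSemiring k] [Semiring S] [CommSemiring A]
    [Algebra k S] [Algebra k A] (u : S →ₐ[k] A⟦X⟧) : Prop :=
  ∀ (B : Type w) [CommRing B] [Algebra k B],
    Function.Bijective fun φ : A →ₐ[k] B => (mapAlgHom φ).comp u

section Polynomial

variable (k σ : Type*) [CommSemiring k]

/-- The arc `x i ↦ ∑ n, X (i, n) t ^ n` of the affine space with coordinates `x i`, whose
coefficients are independent variables. -/
noncomputable def genericArc : MvPolynomial σ k →ₐ[k] (MvPolynomial (σ × ℕ) k)⟦X⟧ :=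
  MvPolynomial.aeval fun i => PowerSeries.mk fun n => MvPolynomial.X (i, n)

variable {k σ}

theorem coeff_mapAlgHom_genericArc_X {B : Type*} [Semiring B] [Algebra k B]
    (φ : MvPolynomial (σ × ℕ) k →ₐ[k] B) (i : σ) (n : ℕ) :
    coeff n (mapAlgHom φ (genericArc k σ (MvPolynomial.X i))) = φ (MvPolynomial.X (i, n)) := by
  rw [coeff_mapAlgHom, genericArc, MvPolynomial.aeval_X, coeff_mk]

variable (k σ) in
theorem isUniversalArc_genericArc : IsUniversalArc.{w} (genericArc k σ) := by
  intro B _ _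
  constructor
  · intro φ ψ h
    refine MvPolynomial.algHom_ext fun ⟨i, n⟩ => ?_
    rw [← coeff_mapAlgHom_genericArc_X φ, ← coeff_mapAlgHom_genericArc_X ψ]
    exact congrArg (coeff n) (DFunLike.congr_fun h (MvPolynomial.X i))
  · intro g
    refine ⟨MvPolynomial.aeval fun p => coeff p.2 (g (MvPolynomial.X p.1)),
      MvPolynomial.algHom_ext fun i => PowerSeries.ext fun n => ?_⟩
    rw [AlgHom.comp_apply, coeff_mapAlgHom_genericArc_X, MvPolynomial.aeval_X]

end Polynomial

section Quotient

variable {k S R A B : Type*} [CommRing k] [CommRing S] [CommRing R] [CommRing A] [CommRing B]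
  [Algebra k S] [Algebra k R] [Algebra k A] [Algebra k B]

/-- The ideal of `A` generated by all coefficients of the series `u f`, for `f` in the ideal `I`
of `S`: the equations under which the arc `u` of `S` becomes an arc of `S ⧸ I`. -/
def arcIdeal (u : S →ₐ[k] A⟦X⟧) (I : Ideal S) : Ideal A :=
  Ideal.span {a | ∃ f ∈ I, ∃ n, coeff n (u f) = a}

theorem arcIdeal_le_ker_iff (u : S →ₐ[k] A⟦X⟧) (I : Ideal S) (φ : A →ₐ[k] B) :
    arcIdeal u I ≤ RingHom.ker φ ↔ I ≤ RingHom.ker ((mapAlgHom φ).comp u) := by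
  rw [arcIdeal, Ideal.span_le]
  constructor
  · intro h f hf
    ext n
    rw [AlgHom.comp_apply, coeff_mapAlgHom, map_zero]
    exact h ⟨f, hf, n, rfl⟩
  · rintro h _ ⟨f, hf, n, rfl⟩
    have hf₀ : mapAlgHom φ (u f) = 0 := h hf
    rw [SetLike.mem_coe, RingHom.mem_ker, ← coeff_mapAlgHom, hf₀, map_zero]

/-- The arc of `R` induced by an arc `u` of `S` along a surjection `π : S → R`, after imposing on
the coefficients of `u` the equations that make it vanish on the kernel of `π`. -/
noncomputable def quotientArc (u : S →ₐ[k] A⟦X⟧) (π : S →ₐ[k] R) (hπ : Function.Surjective π) :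
    R →ₐ[k] (A ⧸ arcIdeal u (RingHom.ker π))⟦X⟧ :=
  AlgHom.liftOfSurjective π hπ ((mapAlgHom (Ideal.Quotient.mkₐ k _)).comp u) <|
    (arcIdeal_le_ker_iff u _ _).1 (Ideal.Quotient.mkₐ_ker k _).ge

theorem quotientArc_comp (u : S →ₐ[k] A⟦X⟧) (π : S →ₐ[k] R) (hπ : Function.Surjective π) :
    (quotientArc u π hπ).comp π = (mapAlgHom (Ideal.Quotient.mkₐ k _)).comp u :=
  AlgHom.liftOfSurjective_comp ..

theorem mapAlgHom_comp_quotientArc_comp (u : S →ₐ[k] A⟦X⟧) (π : S →ₐ[k] R)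
    (hπ : Function.Surjective π) (φ : A ⧸ arcIdeal u (RingHom.ker π) →ₐ[k] B) :
    ((mapAlgHom φ).comp (quotientArc u π hπ)).comp π =
      (mapAlgHom (φ.comp (Ideal.Quotient.mkₐ k _))).comp u := by
  rw [AlgHom.comp_assoc, quotientArc_comp, mapAlgHom_comp, AlgHom.comp_assoc]

theorem IsUniversalArc.quotientArc {u : S →ₐ[k] A⟦X⟧} (hu : IsUniversalArc.{w} u)
    (π : S →ₐ[k] R) (hπ : Function.Surjective π) :
    IsUniversalArc.{w} (quotientArc u π hπ) := by
  intro B _ _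
  constructor
  · intro φ ψ h
    refine Ideal.Quotient.algHom_ext k ((hu B).injective ?_)
    simp only [← mapAlgHom_comp_quotientArc_comp u π hπ]
    exact congrArg (AlgHom.comp · π) h
  · intro g
    obtain ⟨φ, hφ : (mapAlgHom φ).comp u = g.comp π⟩ := (hu B).surjective (g.comp π)
    have hker : arcIdeal u (RingHom.ker π) ≤ RingHom.ker φ := by
      rw [arcIdeal_le_ker_iff, hφ]
      intro f (hf : π f = 0)
      rw [RingHom.mem_ker, AlgHom.comp_apply, hf, map_zero]
    refine ⟨Ideal.Quotient.liftₐ _ φ fun a ha => RingHom.mem_ker.1 (hker ha),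
      (AlgHom.cancel_right hπ).1 ?_⟩
    rw [mapAlgHom_comp_quotientArc_comp, Ideal.Quotient.liftₐ_comp, hφ]

end Quotient

theorem exists_isUniversalArc (k : Type v₁) [CommRing k] (R : Type v₂) [CommRing R] [Algebra k R] :
    ∃ (Rinf : Type (max v₁ v₂)) (_ : CommRing Rinf) (_ : Algebra k Rinf) (u : R →ₐ[k] Rinf⟦X⟧),
      IsUniversalArc.{w} u :=
  have hπ : Function.Surjective (MvPolynomial.aeval id : MvPolynomial R k →ₐ[k] R) :=
    fun r => ⟨MvPolynomial.X r, MvPolynomial.aeval_X id r⟩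
  ⟨_, _, _, _, (isUniversalArc_genericArc k R).quotientArc _ hπ⟩

theorem arc_functor_corepresentable_general (k : Type v₁) [CommRing k]
    (R : Type v₂) [CommRing R] [Algebra k R] :
    ∃ (Rinf : Type (max v₁ v₂)) (_ : CommRing Rinf) (_ : Algebra k Rinf)
      (e : ∀ (A : Type w) [CommRing A] [Algebra k A], (Rinf →ₐ[k] A) ≃ (R →ₐ[k] A⟦X⟧)),
      ∀ (A B : Type w) [CommRing A] [Algebra k A] [CommRing B] [Algebra k B]
        (f : A →ₐ[k] B) (φ : Rinf →ₐ[k] A),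
        e B (f.comp φ) = (mapAlgHom f).comp (e A φ) := by
  obtain ⟨Rinf, _, _, u, hu⟩ := exists_isUniversalArc k R
  refine ⟨Rinf, _, _, fun A _ _ => Equiv.ofBijective _ (hu A), fun A B _ _ _ _ f φ => ?_⟩
  simp only [Equiv.ofBijective_apply, mapAlgHom_comp, AlgHom.comp_assoc]

/-- For a field `k` and a finitely generated commutative `k`-algebra `R`,
the covariant functor `A ↦ Hom_{k-alg}(R, A[[t]])` from commutative `k`-algebras to sets
is corepresentable by a commutative `k`-algebra `R_∞`, via bijections natural in `A`.
(Affine form of the universal property of the arc space `X_∞`.) -/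
theorem arc_functor_corepresentable (k : Type) [Field k]
    (R : Type) [CommRing R] [Algebra k R] (hR : Algebra.FiniteType k R) :
    ∃ (Rinf : Type) (_ : CommRing Rinf) (_ : Algebra k Rinf)
      (e : ∀ (A : Type) [CommRing A] [Algebra k A], (Rinf →ₐ[k] A) ≃ (R →ₐ[k] PowerSeries A)),
      ∀ (A B : Type) [CommRing A] [Algebra k A] [CommRing B] [Algebra k B]
        (f : A →ₐ[k] B) (φ : Rinf →ₐ[k] A),
        e B (f.comp φ) = (psMapAlgHom f).comp (e A φ) := by
  exact arc_functor_corepresentable_general k R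
end

section
/- Let k be an algebraically closed field and let P = k[x_1, x_2, x_3, …] be the polynomial ring over k in countably infinitely many variables. Then the following are equivalent: (i) for every maximal ideal m of P the natural map k → P/m is surjective (i.e., every maximal ideal of P has residue field k, so every closed point of Spec P is a k-valued point); (ii) k is uncountable. -/
/-!
If `x` is transcendental over `F`, the elements `(x - a)⁻¹` for `a ∈ F` are linearly independent,
so a transcendental extension of `F` has dimension at least `#F`. For infinite `σ` the quotients of
`F[x_i : i ∈ σ]` have dimension at most `#σ`, hence the residue fields are algebraic when
`#σ < #F`; for finite `σ` this is Zariski's lemma. Conversely, if `σ` is infinite and `#F ≤ #σ`,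
then `#F(X) ≤ #σ`, and sending the variables onto `F(X)` realises it as a residue field.
-/

section

open Cardinal Function

universe u v w

theorem isAlgebraic_of_lift_rank_lt_lift_mk {F : Type u} {E : Type v} [Field F] [Field E]
    [Algebra F E] (h : lift.{u} (Module.rank F E) < lift.{v} #F) : Algebra.IsAlgebraic F E := by
  refine ⟨fun x ↦ ?_⟩
  by_contra (transcendental : Transcendental F x)
  exact h.not_ge transcendental.linearIndependent_sub_inv.cardinal_lift_le_rank

theorem rank_mvPolynomial_quotient_le {R : Type u} {σ : Type v} [CommRing R] [Nontrivial R]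
    (I : Ideal (MvPolynomial σ R)) :
    Module.rank R (MvPolynomial σ R ⧸ I) ≤ max (lift.{u} #σ) ℵ₀ := by
  have mk_monomials_le : #(σ →₀ ℕ) ≤ max #σ ℵ₀ := by
    cases isEmpty_or_nonempty σ with
    | inl _ => simp
    | inr _ => exact (mk_finsupp_nat σ).le
  calc
    Module.rank R (MvPolynomial σ R ⧸ I) ≤ Module.rank R (MvPolynomial σ R) :=
      (Ideal.Quotient.mkₐ R I).toLinearMap.rank_le_of_surjective (Ideal.Quotient.mkₐ_surjective R I)
    _ = lift.{u} #(σ →₀ ℕ) := MvPolynomial.rank_eq_lift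
    _ ≤ lift.{u} (max #σ ℵ₀) := lift_le.mpr mk_monomials_le
    _ = max (lift.{u} #σ) ℵ₀ := by rw [lift_max, lift_aleph0]

theorem exists_mvPolynomial_algHom_surjective {R : Type u} {σ : Type v} {A : Type w}
    [CommSemiring R] [CommSemiring A] [Algebra R A] (h : lift.{v} #A ≤ lift.{w} #σ) :
    ∃ φ : MvPolynomial σ R →ₐ[R] A, Surjective φ := by
  obtain ⟨ι⟩ := lift_mk_le'.mp h
  refine ⟨MvPolynomial.aeval (invFun ι), fun a ↦ ⟨MvPolynomial.X (ι a), ?_⟩⟩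
  rw [MvPolynomial.aeval_X, leftInverse_invFun ι.injective]

theorem exists_isMaximal_quotient_algEquiv {R : Type u} {σ : Type v} {K : Type w}
    [CommRing R] [Field K] [Algebra R K] (h : lift.{v} #K ≤ lift.{w} #σ) :
    ∃ m : Ideal (MvPolynomial σ R), m.IsMaximal ∧ Nonempty ((MvPolynomial σ R ⧸ m) ≃ₐ[R] K) := by
  obtain ⟨φ, hφ⟩ := exists_mvPolynomial_algHom_surjective (R := R) h
  exact ⟨RingHom.ker φ, RingHom.ker_isMaximal_of_surjective φ hφ,
    ⟨Ideal.quotientKerAlgEquivOfSurjective hφ⟩⟩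

theorem mk_ratFunc (R : Type u) [CommRing R] [IsDomain R] : #(RatFunc R) = max #R ℵ₀ := by
  rw [IsFractionRing.cardinalMk (Polynomial R), Polynomial.cardinalMk_eq_max]

section ResidueFields

variable {F : Type u} {σ : Type v} [Field F]

theorem isAlgebraic_quotient_of_finite [Finite σ] (m : Ideal (MvPolynomial σ F)) [m.IsMaximal] :
    Algebra.IsAlgebraic F (MvPolynomial σ F ⧸ m) := by
  let _ : Field (MvPolynomial σ F ⧸ m) := Ideal.Quotient.field m
  have : Module.Finite F (MvPolynomial σ F ⧸ m) := finite_of_finite_type_of_isJacobsonRing F _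
  infer_instance

theorem isAlgebraic_quotient_of_lift_mk_lt [Infinite σ] (h : lift.{u} #σ < lift.{v} #F)
    (m : Ideal (MvPolynomial σ F)) [m.IsMaximal] :
    Algebra.IsAlgebraic F (MvPolynomial σ F ⧸ m) := by
  let _ : Field (MvPolynomial σ F ⧸ m) := Ideal.Quotient.field m
  have rank_lt : Module.rank F (MvPolynomial σ F ⧸ m) < lift.{v} #F :=
    calc
      Module.rank F (MvPolynomial σ F ⧸ m) ≤ max (lift.{u} #σ) ℵ₀ := rank_mvPolynomial_quotient_le m
      _ = lift.{u} #σ := max_eq_left (aleph0_le_lift.mpr (aleph0_le_mk σ))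
      _ < lift.{v} #F := h
  apply isAlgebraic_of_lift_rank_lt_lift_mk
  rwa [lift_id'.{u, max u v}, lift_umax.{u, v}]

theorem exists_isMaximal_not_isAlgebraic_quotient [Infinite σ] (h : lift.{v} #F ≤ lift.{u} #σ) :
    ∃ m : Ideal (MvPolynomial σ F), m.IsMaximal ∧
      ¬ Algebra.IsAlgebraic F (MvPolynomial σ F ⧸ m) := by
  have mk_ratFunc_le : lift.{v} #(RatFunc F) ≤ lift.{u} #σ := by
    rw [mk_ratFunc, lift_max, lift_aleph0]
    exact max_le h (aleph0_le_lift.mpr (aleph0_le_mk σ))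
  obtain ⟨m, hm, ⟨e⟩⟩ := exists_isMaximal_quotient_algEquiv (R := F) mk_ratFunc_le
  exact ⟨m, hm, fun _ ↦ RatFunc.transcendental_X (e.isAlgebraic.isAlgebraic RatFunc.X)⟩

theorem forall_isMaximal_isAlgebraic_quotient_iff :
    (∀ m : Ideal (MvPolynomial σ F), m.IsMaximal →
        Algebra.IsAlgebraic F (MvPolynomial σ F ⧸ m)) ↔
      Finite σ ∨ lift.{u} #σ < lift.{v} #F := by
  cases finite_or_infinite σ with
  | inl hσ => exact iff_of_true (fun m _ ↦ isAlgebraic_quotient_of_finite m) (.inl hσ)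
  | inr hσ =>
    rw [or_iff_right hσ.not_finite]
    refine ⟨fun algebraic ↦ ?_, fun h m _ ↦ isAlgebraic_quotient_of_lift_mk_lt h m⟩
    by_contra! h
    obtain ⟨m, hm, not_algebraic⟩ := exists_isMaximal_not_isAlgebraic_quotient h
    exact not_algebraic (algebraic m hm)

end ResidueFields

theorem surjective_algebraMap_iff_isAlgebraic {k : Type u} {A : Type v} [Field k] [IsAlgClosed k]
    [Ring A] [IsDomain A] [Algebra k A] :
    Surjective (algebraMap k A) ↔ Algebra.IsAlgebraic k A :=
  ⟨fun h ↦ ⟨h.forall.mpr fun _ ↦ isAlgebraic_algebraMap _⟩,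
    fun _ ↦ IsAlgClosed.algebraMap_bijective_of_isIntegral.surjective⟩

theorem every_closed_point_of_affine_infinity_is_k_valued_iff_uncountable_general
    (k : Type u) [Field k] [IsAlgClosed k] (σ : Type v) :
    (∀ m : Ideal (MvPolynomial σ k), m.IsMaximal →
        Surjective (algebraMap k (MvPolynomial σ k ⧸ m))) ↔
      lift.{u} #σ < lift.{v} #k := by
  have lt_of_finite (_ : Finite σ) : lift.{u} #σ < lift.{v} #k :=
    (lift_lt_aleph0.mpr (mk_lt_aleph0 (α := σ))).trans_le (aleph0_le_lift.mpr (aleph0_le_mk k))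
  rw [← or_iff_right_of_imp lt_of_finite, ← forall_isMaximal_isAlgebraic_quotient_iff]
  exact forall₂_congr fun _ _ ↦ surjective_algebraMap_iff_isAlgebraic

end

/-- Let `k` be an algebraically closed field and
`P = k[x_1, x_2, …]` the polynomial ring over `k` in countably infinitely many
variables. Every maximal ideal of `P` has residue field `k` (i.e. every closed point
of `Spec P` is a `k`-valued point) if and only if `k` is uncountable. -/
theorem every_closed_point_of_affine_infinity_is_k_valued_iff_uncountable
    (k : Type) [Field k] [IsAlgClosed k] :
    (∀ m : Ideal (MvPolynomial ℕ k), m.IsMaximal →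
        Function.Surjective (algebraMap k (MvPolynomial ℕ k ⧸ m))) ↔
      ¬ Countable k := by
  rw [every_closed_point_of_affine_infinity_is_k_valued_iff_uncountable_general, not_countable_iff,
    Cardinal.lift_id, Cardinal.lift_id, Cardinal.mk_nat, Cardinal.aleph0_lt_mk_iff]
end

section
/- Let k be a field, M and X schemes over k, π : M → X and σ : X → M morphisms of k-schemes with π ∘ σ = id_X, and μ : 𝔸¹_k ×_{Spec k} M → M a morphism of k-schemes whose composite with the zero-section M ≅ Spec k ×_{Spec k} M → 𝔸¹_k ×_{Spec k} M (induced by the point t = 0 of 𝔸¹_k) equals σ ∘ π. Let o ∈ 𝔸¹_k be the closed point corresponding to the maximal ideal (t), and let pr₁, pr₂ denote the two projections from 𝔸¹_k ×_{Spec k} M. If Z ⊆ M is a closed subset such that, on underlying topological spaces, μ(pr₁^{-1}(𝔸¹_k ∖ {o}) ∩ pr₂^{-1}(Z)) = Z, then π(Z) = σ^{-1}(Z); in particular the image π(Z) is closed in X. -/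
/-!
Let `z ∈ Z`. The part of the fibre `𝔸¹_{κ(z)}` of `pr₂` over `z` where `t` is invertible is dense in
that fibre, because `t` is not a zero divisor, and `μ` sends it into `Z`. As `Z` is closed, `μ`
sends the whole fibre into `Z`, in particular the point `t = 0`, whose image is `σ (π z)`. So
`σ ∘ π` maps `Z` to itself, and `π '' Z = σ ⁻¹' Z` follows from `π ∘ σ = id`.
-/

open AlgebraicGeometry CategoryTheory Limits

noncomputable section

variable (k : Type) [Field k]

/-- The affine line `𝔸¹_k = Spec k[t]`. -/
abbrev A1 := Spec (CommRingCat.of (Polynomial k))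

/-- The structure morphism `𝔸¹_k → Spec k`. -/
def a1Struct : A1 k ⟶ Speck k :=
  Spec.map (CommRingCat.ofHom (algebraMap k (Polynomial k)))

/-- The `k`-point `t = 0` of `𝔸¹_k`. -/
def a1Zero : Speck k ⟶ A1 k :=
  Spec.map (CommRingCat.ofHom (Polynomial.aeval (0 : k) : Polynomial k →ₐ[k] k).toRingHom)

lemma a1Zero_a1Struct : a1Zero k ≫ a1Struct k = 𝟙 (Speck k) := by
  rw [a1Zero, a1Struct, ← Spec.map_comp, ← Spec.map_id]
  congr 1
  ext c
  simp

/-- The closed point `o` of `𝔸¹_k` corresponding to the maximal ideal `(t)`. -/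
def a1Origin : A1 k :=
  (⟨Ideal.span {Polynomial.X},
    (Ideal.span_singleton_prime Polynomial.X_ne_zero).mpr Polynomial.prime_X⟩ :
      PrimeSpectrum (Polynomial k))

end

universe u

theorem image_eq_preimage_of_mapsTo_comp {α β : Type*} {f : α → β} {g : β → α} {s : Set α}
    (hfg : Function.LeftInverse f g) (hs : Set.MapsTo (g ∘ f) s s) : f '' s = g ⁻¹' s :=
  Set.Subset.antisymm (Set.image_subset_iff.mpr hs) (Set.preimage_subset_image_of_inverse hfg s)

theorem dense_basicOpen_of_mem_nonZeroDivisors {A : Type*} [CommRing A] {a : A}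
    (ha : a ∈ nonZeroDivisors A) : Dense (PrimeSpectrum.basicOpen a : Set (PrimeSpectrum A)) := by
  have hinj : Function.Injective (algebraMap A (Localization.Away a)) :=
    IsLocalization.injective _ (Submonoid.powers_le.mpr ha)
  rw [← PrimeSpectrum.localization_away_comap_range (Localization.Away a) a]
  refine (PrimeSpectrum.denseRange_comap_iff_ker_le_nilRadical _).mpr ?_
  rw [(RingHom.injective_iff_ker_eq_bot _).mp hinj]
  exact bot_le

noncomputable section

open Polynomial

section AffineLine

/-- The structure morphism `𝔸¹_R → Spec R` of the affine line `𝔸¹_R = Spec R[X]` over a commutative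
ring; over a field it is `a1Struct`. -/
def affineLineStruct (R : CommRingCat.{u}) : Spec (.of R[X]) ⟶ Spec R :=
  Spec.map (CommRingCat.ofHom (algebraMap R R[X]))

/-- The section `X = 0` of `𝔸¹_R → Spec R`, for a commutative ring `R`; over a field it is
`a1Zero`. -/
def affineLineZero (R : CommRingCat.{u}) : Spec R ⟶ Spec (.of R[X]) :=
  Spec.map (CommRingCat.ofHom (aeval (0 : R) : R[X] →ₐ[R] R).toRingHom)

/-- The morphism `𝔸¹_A → 𝔸¹_R` over `Spec A → Spec R` induced by `φ : R ⟶ A`; the coordinate `X`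
pulls back to the coordinate `X`. -/
def affineLineMap {R A : CommRingCat.{u}} (φ : R ⟶ A) : Spec (.of A[X]) ⟶ Spec (.of R[X]) :=
  Spec.map (CommRingCat.ofHom (mapRingHom φ.hom))

/-- The punctured affine line `𝔸¹_R ∖ {X = 0}`, encoded as the locus `D(X)`. -/
def puncturedAffineLine (R : CommRingCat.{u}) : (Spec (.of R[X])).Opens :=
  PrimeSpectrum.basicOpen (X : R[X])

theorem dense_puncturedAffineLine (R : CommRingCat.{u}) :
    Dense (puncturedAffineLine R : Set (Spec (.of R[X]))) :=
  dense_basicOpen_of_mem_nonZeroDivisors X_mem_nonzeroDivisors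

theorem affineLineZero_comp_struct (R : CommRingCat.{u}) :
    affineLineZero R ≫ affineLineStruct R = 𝟙 (Spec R) := by
  rw [affineLineZero, affineLineStruct, ← Spec.map_comp, ← Spec.map_id]
  congr 1
  ext a
  simp

variable {R A : CommRingCat.{u}} (φ : R ⟶ A)

theorem affineLineMap_comp_struct :
    affineLineMap φ ≫ affineLineStruct R = affineLineStruct A ≫ Spec.map φ := by
  simp only [affineLineMap, affineLineStruct, ← Spec.map_comp]
  congr 1
  ext a
  simp

theorem affineLineZero_comp_map :
    affineLineZero A ≫ affineLineMap φ = Spec.map φ ≫ affineLineZero R := by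
  simp only [affineLineMap, affineLineZero, ← Spec.map_comp]
  congr 1
  ext a <;> simp

theorem preimage_affineLineMap_puncturedAffineLine :
    affineLineMap φ ⁻¹ᵁ puncturedAffineLine R = puncturedAffineLine A := by
  ext p
  change mapRingHom φ.hom X ∉ p.asIdeal ↔ X ∉ p.asIdeal
  rw [coe_mapRingHom, map_X]

end AffineLine

section RelativeAffineLine

variable {R A : CommRingCat.{u}} {M : Scheme.{u}} (f : M ⟶ Spec R) (p : Spec A ⟶ M)

/-- The zero section `M → 𝔸¹_R ×_R M` of the relative affine line over an `R`-scheme `M`. -/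
def affineLineZeroSection : M ⟶ pullback (affineLineStruct R) f :=
  pullback.lift (f ≫ affineLineZero R) (𝟙 M)
    (by rw [Category.assoc, affineLineZero_comp_struct, Category.comp_id, Category.id_comp])

/-- The complement of the zero section in `𝔸¹_R ×_R M`, encoded as the locus where the coordinate of
`𝔸¹_R` is invertible. -/
def relativePuncturedAffineLine : (pullback (affineLineStruct R) f).Opens :=
  pullback.fst (affineLineStruct R) f ⁻¹ᵁ puncturedAffineLine R

/-- The base change `𝔸¹_A → 𝔸¹_R ×_R M` of an `A`-valued point `p : Spec A → M`. For
`A = κ(z)` it parametrises the fibre of `𝔸¹_R ×_R M → M` over `z`. -/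
def affineLineBaseChange : Spec (.of A[X]) ⟶ pullback (affineLineStruct R) f :=
  pullback.lift (affineLineMap (Spec.preimage (p ≫ f))) (affineLineStruct A ≫ p)
    (by rw [affineLineMap_comp_struct, Spec.map_preimage, Category.assoc])

theorem affineLineBaseChange_fst :
    affineLineBaseChange f p ≫ pullback.fst (affineLineStruct R) f =
      affineLineMap (Spec.preimage (p ≫ f)) :=
  pullback.lift_fst ..

theorem affineLineBaseChange_snd :
    affineLineBaseChange f p ≫ pullback.snd (affineLineStruct R) f = affineLineStruct A ≫ p :=
  pullback.lift_snd ..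

theorem affineLineZero_comp_baseChange :
    affineLineZero A ≫ affineLineBaseChange f p = p ≫ affineLineZeroSection f := by
  apply pullback.hom_ext
  · rw [Category.assoc, affineLineBaseChange_fst, affineLineZero_comp_map, Spec.map_preimage,
      Category.assoc, Category.assoc, affineLineZeroSection, pullback.lift_fst]
  · rw [Category.assoc, affineLineBaseChange_snd, reassoc_of% affineLineZero_comp_struct,
      Category.assoc, affineLineZeroSection, pullback.lift_snd, Category.comp_id]

theorem preimage_affineLineBaseChange_puncturedAffineLine :
    affineLineBaseChange f p ⁻¹ᵁ relativePuncturedAffineLine f = puncturedAffineLine A := by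
  rw [relativePuncturedAffineLine, ← Scheme.Hom.comp_preimage, affineLineBaseChange_fst,
    preimage_affineLineMap_puncturedAffineLine]

theorem affineLineZeroSection_mem_closure (z : M) :
    affineLineZeroSection f z ∈
      closure (relativePuncturedAffineLine f ∩ pullback.snd (affineLineStruct R) f ⁻¹' {z}) := by
  let p := M.fromSpecResidueField z
  have hp (x) : p x = z := Scheme.fromSpecResidueField_apply z x
  let x : Spec (M.residueField z) := IsLocalRing.closedPoint _
  have zero_eq : affineLineBaseChange f p (affineLineZero _ x) = affineLineZeroSection f z := by
    rw [← Scheme.Hom.comp_apply, affineLineZero_comp_baseChange, Scheme.Hom.comp_apply, hp]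
  rw [← zero_eq]
  refine map_mem_closure (affineLineBaseChange f p).continuous
    (dense_puncturedAffineLine _ _) fun y hy => ⟨?_, ?_⟩
  · rwa [← preimage_affineLineBaseChange_puncturedAffineLine f p] at hy
  · rw [Set.mem_preimage, ← Scheme.Hom.comp_apply, affineLineBaseChange_snd,
      Scheme.Hom.comp_apply, hp, Set.mem_singleton_iff]

theorem mapsTo_affineLineZeroSection_comp (μ : pullback (affineLineStruct R) f ⟶ M) {Z : Set M}
    (hZ : IsClosed Z)
    (hinv : μ '' (relativePuncturedAffineLine f ∩
      pullback.snd (affineLineStruct R) f ⁻¹' Z) ⊆ Z) :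
    Set.MapsTo (affineLineZeroSection f ≫ μ) Z Z := by
  intro z hz
  rw [Scheme.Hom.comp_apply, ← hZ.closure_eq]
  refine map_mem_closure μ.continuous (affineLineZeroSection_mem_closure f z) ?_
  rintro w ⟨hw, rfl⟩
  exact hinv ⟨w, ⟨hw, hz⟩, rfl⟩

theorem image_of_invariant_closed_is_closed_general {X : Scheme.{u}} (π : M ⟶ X) (σ : X ⟶ M)
    (hsec : σ ≫ π = 𝟙 X) (μ : pullback (affineLineStruct R) f ⟶ M)
    (hzero : affineLineZeroSection f ≫ μ = π ≫ σ) {Z : Set M} (hZ : IsClosed Z)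
    (hinv : μ '' (relativePuncturedAffineLine f ∩
      pullback.snd (affineLineStruct R) f ⁻¹' Z) ⊆ Z) :
    π '' Z = σ ⁻¹' Z ∧ IsClosed (π '' Z) := by
  have hleft : Function.LeftInverse π σ := fun x => by
    rw [← Scheme.Hom.comp_apply, hsec, Scheme.Hom.id_base, TopCat.id_app]
  have hmaps : Set.MapsTo (σ ∘ π) Z Z := by
    simpa only [hzero, Scheme.Hom.comp_base, TopCat.coe_comp] using
      mapsTo_affineLineZeroSection_comp f μ hZ hinv
  have himage : π '' Z = σ ⁻¹' Z := image_eq_preimage_of_mapsTo_comp hleft hmaps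
  exact ⟨himage, himage ▸ hZ.preimage σ.continuous⟩

end RelativeAffineLine

theorem puncturedAffineLine_subset_compl_a1Origin (k : Type) [Field k] :
    (puncturedAffineLine (.of k) : Set (A1 k)) ⊆ {a1Origin k}ᶜ := by
  rintro _ hp rfl
  exact hp (Ideal.mem_span_singleton_self X)

end

open AlgebraicGeometry CategoryTheory Limits in
/-- Let `π : M → X` and `σ : X → M` be `k`-morphisms with `π ∘ σ = id`, and
let `μ : 𝔸¹_k ×_{Spec k} M → M` be a `k`-morphism whose composite with the zero-section
`M → 𝔸¹_k ×_{Spec k} M` equals `σ ∘ π`. If `Z ⊆ M` is a closed subset with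
`μ(pr₁^{-1}(𝔸¹_k ∖ {o}) ∩ pr₂^{-1}(Z)) = Z`, then `π(Z) = σ^{-1}(Z)`; in particular
`π(Z)` is closed in `X`. -/
theorem image_of_invariant_closed_is_closed (k : Type) [Field k]
    (M X : Scheme) (sM : M ⟶ Speck k) (sX : X ⟶ Speck k)
    (π : M ⟶ X) (σ : X ⟶ M)
    (hπ : π ≫ sX = sM) (hσ : σ ≫ sM = sX) (hsec : σ ≫ π = 𝟙 X)
    (μ : pullback (a1Struct k) sM ⟶ M)
    (hμ : μ ≫ sM = pullback.snd (a1Struct k) sM ≫ sM)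
    (hzero : pullback.lift (sM ≫ a1Zero k) (𝟙 M)
        (by rw [Category.assoc, a1Zero_a1Struct, Category.comp_id, Category.id_comp]) ≫ μ
      = π ≫ σ)
    (Z : Set M) (hZ : IsClosed Z)
    (hinv : μ.base ''
        ((pullback.fst (a1Struct k) sM).base ⁻¹' {a1Origin k}ᶜ ∩
          (pullback.snd (a1Struct k) sM).base ⁻¹' Z) = Z) :
    π.base '' Z = σ.base ⁻¹' Z ∧ IsClosed (π.base '' Z) :=
  image_of_invariant_closed_is_closed_general sM π σ hsec μ hzero hZ <| hinv.subset.trans' <|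
    Set.image_mono <| Set.inter_subset_inter_left _ <|
      Set.preimage_mono (puncturedAffineLine_subset_compl_a1Origin k)
end

section
/- Let k be a field, m a natural number, and f : R → S a surjective homomorphism of commutative k-algebras. Suppose R_m corepresents the functor A ↦ Hom_{k-alg}(R, A[t]/(t^{m+1})) and S_m corepresents the functor A ↦ Hom_{k-alg}(S, A[t]/(t^{m+1})), via bijections natural in the commutative k-algebra A. Let h : R_m → S_m be the unique k-algebra homomorphism such that for every commutative k-algebra A the square formed by the two corepresenting bijections, precomposition with h, and precomposition with f commutes (h exists and is unique by the Yoneda lemma). Then h is surjective. (This is the affine form of the statement that a closed immersion X → Y induces a closed immersion X_m → Y_m of m-jet schemes.) -/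
/-!
For `A = R, S` let `u_A : A → A_m[t]/(t^{m+1})` be the universal jet. The square at
`id : S_m → S_m` says that `h` carries `u_R` to `u_S ∘ f`, so `u_S ∘ f` has its coefficients in the
subalgebra `h(R_m)` of `S_m`. As `f` is surjective, `u_S` itself has its coefficients there,
and a subalgebra containing the coefficients of the universal jet is everything, since the jet it
defines is classified by a section of its inclusion.
-/

theorem exists_lift_of_surjective_of_injective {k R S A B : Type*} [CommRing k] [CommRing R]
    [CommRing S] [CommRing A] [Semiring B] [Algebra k R] [Algebra k S] [Algebra k A] [Algebra k B]
    {f : R →ₐ[k] S} (hf : Function.Surjective f) {g : A →ₐ[k] B} (hg : Function.Injective g)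
    {v : R →ₐ[k] A} {u : S →ₐ[k] B} (hsq : g.comp v = u.comp f) :
    ∃ w : S →ₐ[k] A, g.comp w = u := by
  have hker : RingHom.ker f.toRingHom ≤ RingHom.ker v.toRingHom := fun a (ha : f a = 0) ↦ hg <| by
    calc g (v a) = u (f a) := DFunLike.congr_fun hsq a
      _ = g 0 := by rw [ha, map_zero, map_zero]
  refine ⟨f.liftOfSurjective hf v hker, (AlgHom.cancel_right hf).1 ?_⟩
  rw [AlgHom.comp_assoc, AlgHom.liftOfSurjective_comp, hsq]

section UniversalJet

variable {k : Type} [CommRing k] {m : ℕ}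

@[simp]
theorem jetMap_mk {A B : Type} [CommRing A] [CommRing B] [Algebra k A] [Algebra k B]
    (g : A →ₐ[k] B) (p : Polynomial A) :
    jetMap m g (Ideal.Quotient.mk _ p) = Ideal.Quotient.mk _ (p.map (g : A →+* B)) :=
  rfl

theorem jetMap_id (A : Type) [CommRing A] [Algebra k A] :
    jetMap m (AlgHom.id k A) = AlgHom.id k (Jet A m) := by
  refine Ideal.Quotient.algHom_ext _ (AlgHom.ext fun p ↦ ?_)
  exact congrArg (Ideal.Quotient.mk _) p.map_id

theorem jetMap_comp {A B C : Type} [CommRing A] [CommRing B] [CommRing C]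
    [Algebra k A] [Algebra k B] [Algebra k C] (g : B →ₐ[k] C) (f : A →ₐ[k] B) :
    jetMap m (g.comp f) = (jetMap m g).comp (jetMap m f) := by
  refine Ideal.Quotient.algHom_ext _ (AlgHom.ext fun p ↦ ?_)
  exact congrArg (Ideal.Quotient.mk _) (p.map_map (f : A →+* B) (g : B →+* C)).symm

theorem jet_mk_eq_zero_iff {A : Type} [CommRing A] {p : Polynomial A} :
    (Ideal.Quotient.mk _ p : Jet A m) = 0 ↔ ∀ d < m + 1, p.coeff d = 0 := by
  rw [Ideal.Quotient.eq_zero_iff_mem, Ideal.mem_span_singleton, Polynomial.X_pow_dvd_iff]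

theorem jetMap_injective {A B : Type} [CommRing A] [CommRing B] [Algebra k A] [Algebra k B]
    {g : A →ₐ[k] B} (hg : Function.Injective g) : Function.Injective (jetMap m g) := by
  refine (injective_iff_map_eq_zero _).2 fun x hx ↦ ?_
  obtain ⟨p, rfl⟩ := Ideal.Quotient.mk_surjective x
  rw [jetMap_mk, jet_mk_eq_zero_iff] at hx
  exact jet_mk_eq_zero_iff.2 fun d hd ↦
    (map_eq_zero_iff g hg).1 ((Polynomial.coeff_map _ d).symm.trans (hx d hd))

/-- `u : S → S_m[t]/(t^{m+1})` is the universal `m`-jet on `S`: every `m`-jet `S → A[t]/(t^{m+1})`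
is obtained from `u` along a unique homomorphism `S_m → A`. By the Yoneda lemma, such a `u` is the
same as a natural bijection `Hom(S_m, A) ≃ Hom(S, A[t]/(t^{m+1}))`. -/
def IsUniversalJet {S Sm : Type} [CommRing S] [CommRing Sm] [Algebra k S] [Algebra k Sm]
    (u : S →ₐ[k] Jet Sm m) : Prop :=
  ∀ (A : Type) [CommRing A] [Algebra k A],
    Function.Bijective fun ψ : Sm →ₐ[k] A ↦ (jetMap m ψ).comp u

variable {R S Rm Sm : Type} [CommRing R] [CommRing S] [CommRing Rm] [CommRing Sm]
  [Algebra k R] [Algebra k S] [Algebra k Rm] [Algebra k Sm]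

theorem isUniversalJet_of_corepresents
    (e : ∀ (A : Type) [CommRing A] [Algebra k A], (Sm →ₐ[k] A) ≃ (S →ₐ[k] Jet A m))
    (enat : ∀ (A B : Type) [CommRing A] [Algebra k A] [CommRing B] [Algebra k B]
      (g : A →ₐ[k] B) (ψ : Sm →ₐ[k] A), e B (g.comp ψ) = (jetMap m g).comp (e A ψ)) :
    IsUniversalJet (e Sm (AlgHom.id k Sm)) := fun A _ _ ↦ by
  simpa only [← enat, AlgHom.comp_id] using (e A).bijective

theorem IsUniversalJet.eq_top_of_jetMap_val_comp_eq {u : S →ₐ[k] Jet Sm m} (hu : IsUniversalJet u)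
    {T : Subalgebra k Sm} {w : S →ₐ[k] Jet T m} (hw : (jetMap m T.val).comp w = u) : T = ⊤ := by
  obtain ⟨ψ, hψ : (jetMap m ψ).comp u = w⟩ := (hu T).surjective w
  have hsection : T.val.comp ψ = AlgHom.id k Sm := (hu Sm).injective <| by
    rw [jetMap_comp, AlgHom.comp_assoc, hψ, hw, jetMap_id, AlgHom.id_comp]
  refine Algebra.eq_top_iff.2 fun s ↦ ?_
  have hs : (ψ s : Sm) = s := DFunLike.congr_fun hsection s
  exact hs ▸ (ψ s).2

theorem jet_of_surjective_is_surjective_general {f : R →ₐ[k] S} (hf : Function.Surjective f)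
    {v : R →ₐ[k] Jet Rm m} {u : S →ₐ[k] Jet Sm m} (hu : IsUniversalJet u) {h : Rm →ₐ[k] Sm}
    (hsquare : (jetMap m h).comp v = u.comp f) : Function.Surjective h := by
  have hsquare_range :
      (jetMap m h.range.val).comp ((jetMap m h.rangeRestrict).comp v) = u.comp f := by
    rw [← AlgHom.comp_assoc, ← jetMap_comp, AlgHom.val_comp_rangeRestrict, hsquare]
  obtain ⟨w, hw⟩ := exists_lift_of_surjective_of_injective hf
    (jetMap_injective Subtype.val_injective) hsquare_range
  exact (AlgHom.range_eq_top h).1 (hu.eq_top_of_jetMap_val_comp_eq hw)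

end UniversalJet

/-- Let `f : R → S` be a surjective homomorphism of commutative
`k`-algebras, let `R_m` and `S_m` corepresent the `m`-jet functors of `R` and `S`
(naturally in `A`), and let `h : R_m → S_m` be the `k`-algebra homomorphism making the
evident squares commute. Then `h` is surjective. (Affine form of: a closed immersion
`X → Y` induces a closed immersion `X_m → Y_m`.) -/
theorem jet_of_surjective_is_surjective (k : Type) [Field k] (m : ℕ)
    (R S : Type) [CommRing R] [CommRing S] [Algebra k R] [Algebra k S]
    (f : R →ₐ[k] S) (hf : Function.Surjective f)
    (Rm Sm : Type) [CommRing Rm] [CommRing Sm] [Algebra k Rm] [Algebra k Sm]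
    (eR : ∀ (A : Type) [CommRing A] [Algebra k A], (Rm →ₐ[k] A) ≃ (R →ₐ[k] Jet A m))
    (eRnat : ∀ (A B : Type) [CommRing A] [Algebra k A] [CommRing B] [Algebra k B]
      (g : A →ₐ[k] B) (φ : Rm →ₐ[k] A), eR B (g.comp φ) = (jetMap m g).comp (eR A φ))
    (eS : ∀ (A : Type) [CommRing A] [Algebra k A], (Sm →ₐ[k] A) ≃ (S →ₐ[k] Jet A m))
    (eSnat : ∀ (A B : Type) [CommRing A] [Algebra k A] [CommRing B] [Algebra k B]
      (g : A →ₐ[k] B) (ψ : Sm →ₐ[k] A), eS B (g.comp ψ) = (jetMap m g).comp (eS A ψ))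
    (h : Rm →ₐ[k] Sm)
    (hsquare : ∀ (A : Type) [CommRing A] [Algebra k A] (ψ : Sm →ₐ[k] A),
      eR A (ψ.comp h) = ((eS A ψ) : S →ₐ[k] Jet A m).comp f) :
    Function.Surjective h :=
  jet_of_surjective_is_surjective_general hf (isUniversalJet_of_corepresents eS eSnat)
    (v := eR Rm (AlgHom.id k Rm)) <| by
      rw [← eRnat, AlgHom.comp_id, ← hsquare, AlgHom.id_comp]
end

section
/- Let k be an algebraically closed field, X an integral scheme of finite type over k, K ⊇ k a field extension, and α : Spec K[[t]] → X a morphism of k-schemes. Let 0 denote the closed point of Spec K[[t]] and x = α(0). Then the induced homomorphism on stalks α* : O_{X,x} → O_{Spec K[[t]], 0} is injective if and only if α is a fat arc, i.e., there is no proper closed subset Z ⊊ X containing the set-theoretic image of α; equivalently, the image under α of the generic point of Spec K[[t]] is the generic point of X. -/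
open AlgebraicGeometry CategoryTheory Limits

/-! An arc is fat precisely when it is dominant. For a morphism `f : Y → X` with `Y` irreducible and
`X` integral, dominance can be tested on local rings: the maps `Spec O_{Y,y} → Y` and
`Spec O_{X,f(y)} → X` hit the generic points, hence are dominant, and the second one is moreover a
topological embedding, so `f` is dominant if and only if `Spec O_{Y,y} → Spec O_{X,f(y)}` is. As
`O_{X,f(y)}` is reduced, this happens if and only if the stalk map is injective. -/

section Topology

variable {X Y : Type*} [TopologicalSpace X] [TopologicalSpace Y]

theorem dense_iff_not_exists_isClosed_superset {s : Set X} :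
    Dense s ↔ ¬∃ Z : Set X, IsClosed Z ∧ Z ≠ Set.univ ∧ s ⊆ Z := by
  constructor
  · rintro hs ⟨Z, hZ, hne, hsZ⟩
    exact hne (hZ.closure_eq.symm.trans (hs.mono hsZ).closure_eq)
  · intro h
    by_contra hs
    exact h ⟨closure s, isClosed_closure, mt dense_iff_closure_eq.mpr hs, subset_closure⟩

theorem denseRange_iff_map_genericPoint [QuasiSober X] [IrreducibleSpace X] [QuasiSober Y]
    [IrreducibleSpace Y] [T0Space Y] {f : X → Y} (hf : Continuous f) :
    DenseRange f ↔ f (genericPoint X) = genericPoint Y := by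
  have hη : IsGenericPoint (f (genericPoint X)) (closure (Set.range f)) := by
    simpa only [Set.image_univ] using (genericPoint_spec X).image hf
  rw [denseRange_iff_closure_range]
  constructor
  · intro h
    exact (h ▸ hη).eq (genericPoint_spec Y)
  · intro h
    exact hη.def.symm.trans (h ▸ genericPoint_spec Y)

theorem denseRange_comp_iff_of_isInducing {W : Type*} {f : W → X} {g : X → Y}
    (hg : Topology.IsInducing g) (hgd : DenseRange g) :
    DenseRange (g ∘ f) ↔ DenseRange f := by
  refine ⟨fun h x ↦ ?_, fun h ↦ hgd.comp h hg.continuous⟩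
  rw [hg.closure_eq_preimage_closure_image, ← Set.range_comp]
  exact h (g x)

end Topology

theorem denseRange_primeSpectrum_comap_iff_injective {R S : Type*} [CommRing R] [IsReduced R]
    [CommSemiring S] (φ : R →+* S) :
    DenseRange (PrimeSpectrum.comap φ) ↔ Function.Injective φ := by
  rw [PrimeSpectrum.denseRange_comap_iff_ker_le_nilRadical, nilradical_eq_zero,
    Ideal.zero_eq_bot, le_bot_iff, RingHom.injective_iff_ker_eq_bot]

section Scheme

universe u

variable {X Y : Scheme.{u}}

instance isDominant_fromSpecStalk [IrreducibleSpace X] (x : X) :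
    IsDominant (X.fromSpecStalk x) where
  denseRange := by
    have hη : genericPoint X ∈ Set.range (X.fromSpecStalk x) := by
      rw [Scheme.range_fromSpecStalk]
      exact genericPoint_specializes x
    exact (dense_iff_closure_eq.mpr (genericPoint_closure X)).mono
      (Set.singleton_subset_iff.mpr hη)

theorem isDominant_comp_iff_of_isPreimmersion {W : Scheme.{u}} (f : W ⟶ X) (g : X ⟶ Y)
    [IsPreimmersion g] [IsDominant g] : IsDominant (f ≫ g) ↔ IsDominant f := by
  rw [isDominant_iff, isDominant_iff, Scheme.Hom.comp_base, TopCat.coe_comp]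
  exact denseRange_comp_iff_of_isInducing g.isEmbedding.isInducing g.denseRange

theorem isDominant_SpecMap_iff_injective {R S : CommRingCat.{u}} [IsReduced R] (φ : R ⟶ S) :
    IsDominant (Spec.map φ) ↔ Function.Injective φ :=
  (isDominant_iff _).trans (denseRange_primeSpectrum_comap_iff_injective φ.hom)

theorem stalkMap_injective_iff_isDominant [IrreducibleSpace Y] [IsIntegral X] (f : Y ⟶ X)
    (y : Y) : Function.Injective (f.stalkMap y) ↔ IsDominant f :=
  calc
    Function.Injective (f.stalkMap y) ↔ IsDominant (Spec.map (f.stalkMap y)) :=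
      (isDominant_SpecMap_iff_injective _).symm
    _ ↔ IsDominant (Spec.map (f.stalkMap y) ≫ X.fromSpecStalk (f y)) :=
      (isDominant_comp_iff_of_isPreimmersion _ _).symm
    _ ↔ IsDominant (Y.fromSpecStalk y ≫ f) := by rw [Scheme.SpecMap_stalkMap_fromSpecStalk]
    _ ↔ IsDominant f := IsDominant.comp_iff _ _

theorem fat_arc_iff_stalkMap_injective_general [IrreducibleSpace Y] [IsIntegral X] (f : Y ⟶ X)
    (y : Y) :
    (Function.Injective (f.stalkMap y) ↔
      ¬∃ Z : Set X, IsClosed Z ∧ Z ≠ Set.univ ∧ Set.range f ⊆ Z) ∧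
    ((¬∃ Z : Set X, IsClosed Z ∧ Z ≠ Set.univ ∧ Set.range f ⊆ Z) ↔
      f (genericPoint Y) = genericPoint X) := by
  rw [← dense_iff_not_exists_isClosed_superset, stalkMap_injective_iff_isDominant, isDominant_iff]
  exact ⟨Iff.rfl, denseRange_iff_map_genericPoint f.continuous⟩

end Scheme

/-- Let `X` be an integral scheme of finite type over an algebraically
closed field `k`, `K ⊇ k` a field extension, and `α : Spec K[[t]] → X` a `k`-morphism,
with `x = α(0)` the image of the closed point. Then the stalk map
`α* : O_{X,x} → O_{Spec K[[t]],0}` is injective if and only if `α` is a fat arc (no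
proper closed subset of `X` contains the image of `α`), which is in turn equivalent to:
`α` maps the generic point of `Spec K[[t]]` to the generic point of `X`. -/
theorem fat_arc_iff_stalkMap_injective (k : Type) [Field k] [IsAlgClosed k]
    (X : Scheme) (sX : X ⟶ Spec (CommRingCat.of k)) [IsIntegral X]
    [LocallyOfFiniteType sX] [QuasiCompact sX]
    (K : Type) [Field K] [Algebra k K]
    (α : Spec (CommRingCat.of (PowerSeries K)) ⟶ X)
    (hα : α ≫ sX = Spec.map (CommRingCat.ofHom (algebraMap k (PowerSeries K)))) :
    (Function.Injective
        (α.stalkMap (IsLocalRing.closedPoint (PowerSeries K) : PrimeSpectrum (PowerSeries K))) ↔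
      ¬∃ Z : Set X, IsClosed Z ∧ Z ≠ Set.univ ∧ Set.range α.base ⊆ Z) ∧
    ((¬∃ Z : Set X, IsClosed Z ∧ Z ≠ Set.univ ∧ Set.range α.base ⊆ Z) ↔
      α.base (⟨⊥, Ideal.bot_prime⟩ : PrimeSpectrum (PowerSeries K)) = genericPoint X) := by
  have : IsDomain (CommRingCat.of (PowerSeries K)) := inferInstanceAs (IsDomain (PowerSeries K))
  have h := fat_arc_iff_stalkMap_injective_general α (IsLocalRing.closedPoint (PowerSeries K))
  rwa [genericPoint_eq_bot_of_affine] at h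
end
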